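/- arXiv:1705.09195 — 4 statements merged into one kernel-verified Lean document; each statement's English description precedes it below -/
import Mathlib

section
/- Let X ⊆ P² be a k-configuration of type (d₁,…,d_s) with (d₁,…,d_s) ≠ (1). Then the number of lines L in P² with |L ∩ X| = d_s is at most ΔH_X(d_s − 1) + 1, where ΔH_X is the first difference of the Hilbert function of X. -/
/-- The projective plane over a field `K`, as the projectivization of `K³`. -/
abbrev P2 (K : Type) [Field K] := Projectivization K (Fin 3 → K)

/-- A line in `P2 K`: a 2-dimensional linear subspace of `K³`. -/
structure ProjLine (K : Type) [Field K] where
  toSubmodule : Submodule K (Fin 3 → K)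
  finrank_eq_two : Module.finrank K toSubmodule = 2

/-- The set of points of `P2 K` lying on a line. -/
def ProjLine.points {K : Type} [Field K] (L : ProjLine K) : Set (P2 K) :=
  {p | p.submodule ≤ L.toSubmodule}

/-- The homogeneous prime ideal of a point of `P2 K`: the ideal generated by
the linear forms vanishing at the point. -/
noncomputable def pointIdeal {K : Type} [Field K] (p : P2 K) :
    Ideal (MvPolynomial (Fin 3) K) :=
  Ideal.span {f | f.IsHomogeneous 1 ∧ MvPolynomial.eval p.rep f = 0}

/-- The defining ideal `I_{mX} = ⋂_{P ∈ X} I_P^m` of the fat point scheme `mX`. -/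
noncomputable def fatIdeal {K : Type} [Field K] (X : Set (P2 K)) (m : ℕ) :
    Ideal (MvPolynomial (Fin 3) K) :=
  ⨅ p ∈ X, (pointIdeal p) ^ m

/-- The Hilbert function of `R/I`: `H(t) = dim_K R_t - dim_K I_t`. -/
noncomputable def hilb {K : Type} [Field K] (I : Ideal (MvPolynomial (Fin 3) K)) (t : ℕ) : ℕ :=
  Module.finrank K ↥(MvPolynomial.homogeneousSubmodule (Fin 3) K t) -
    Module.finrank K ↥(Submodule.restrictScalars K (I : Submodule (MvPolynomial (Fin 3) K) (MvPolynomial (Fin 3) K)) ⊓ MvPolynomial.homogeneousSubmodule (Fin 3) K t)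

/-- The Hilbert function extended to `ℤ`, with `H(t) = 0` for `t < 0`. -/
noncomputable def hilbZ {K : Type} [Field K] (I : Ideal (MvPolynomial (Fin 3) K)) (t : ℤ) : ℤ :=
  if t < 0 then 0 else hilb I t.toNat

/-- The first difference `ΔH(t) = H(t) - H(t-1)` of the Hilbert function. -/
noncomputable def deltaHilb {K : Type} [Field K] (I : Ideal (MvPolynomial (Fin 3) K)) (t : ℤ) : ℤ :=
  hilbZ I t - hilbZ I (t - 1)

/-- `X` is a k-configuration of type `(d 0, …, d (s-1))` defined using the subsets
`Xs 0, …, Xs (s-1)` and the (distinct) lines `Ls 0, …, Ls (s-1)`. -/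
structure IsKConfig {K : Type} [Field K] {s : ℕ} (X : Set (P2 K)) (d : Fin s → ℕ)
    (Xs : Fin s → Set (P2 K)) (Ls : Fin s → ProjLine K) : Prop where
  one_le : ∀ i, 1 ≤ d i
  strictMono : StrictMono d
  lines_distinct : Function.Injective Ls
  union_eq : X = ⋃ i, Xs i
  card_eq : ∀ i, (Xs i).ncard = d i
  subset_line : ∀ i, Xs i ⊆ (Ls i).points
  not_mem : ∀ i j : Fin s, j < i → ∀ p ∈ Xs j, p ∉ (Ls i).points


namespace KCfg
open MvPolynomial

variable {K : Type} [Field K]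

noncomputable def lin (a : Fin 3 → K) : MvPolynomial (Fin 3) K := ∑ i, C (a i) * X i

lemma lin_hom (a : Fin 3 → K) : (lin a).IsHomogeneous 1 := by
  unfold lin
  exact IsHomogeneous.sum _ _ _ (fun i _ => isHomogeneous_C_mul_X _ _)

lemma eval_lin (a v : Fin 3 → K) : eval v (lin a) = ∑ i, a i * v i := by
  simp [lin]

lemma eval_smul_hom {f : MvPolynomial (Fin 3) K} {t : ℕ} (hf : f.IsHomogeneous t)
    (c : K) (v : Fin 3 → K) : eval (c • v) f = c ^ t * eval v f := by
  rw [eval_eq', eval_eq', Finset.mul_sum]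
  refine Finset.sum_congr rfl fun d hd => ?_
  have h := hf (mem_support_iff.1 hd)
  have h2 : ∑ i, d i = t := by
    rw [← h]; simp [Finsupp.weight_apply, Finsupp.sum_fintype]
  simp only [Pi.smul_apply, smul_eq_mul, mul_pow, Finset.prod_mul_distrib]
  rw [Finset.prod_pow_eq_pow_sum, h2]; ring

lemma dual_eq (f : (Fin 3 → K) →ₗ[K] K) (v : Fin 3 → K) :
    f v = eval v (lin fun i => f (Pi.single i 1)) := by
  rw [eval_lin]
  conv_lhs => rw [LinearMap.pi_apply_eq_sum_univ f v]
  refine Finset.sum_congr rfl fun i _ => ?_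
  rw [smul_eq_mul, mul_comm]
  congr 2
  funext j
  simp [Pi.single_apply, eq_comm]

lemma exists_form (L : ProjLine K) :
    ∃ a : Fin 3 → K, a ≠ 0 ∧ ∀ v, v ∈ L.toSubmodule ↔ eval v (lin a) = 0 := by
  have hlt : L.toSubmodule < ⊤ := by
    rw [lt_top_iff_ne_top]; intro h
    have := L.finrank_eq_two
    rw [h] at this; simp at this
  obtain ⟨f, hf, hle⟩ := Submodule.exists_le_ker_of_lt_top _ hlt
  have hker : L.toSubmodule = LinearMap.ker f := by
    apply Submodule.eq_of_le_of_finrank_le hle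
    rw [L.finrank_eq_two]
    have h1 := LinearMap.finrank_range_add_finrank_ker f
    have h2 : Module.finrank K (LinearMap.range f) = 1 := by
      rw [LinearMap.range_eq_top.2 (LinearMap.surjective hf)]; simp
    simp at h1; omega
  refine ⟨fun i => f (Pi.single i 1), ?_, fun v => ?_⟩
  · intro h
    apply hf
    ext i
    simpa using congrFun h i
  · rw [hker, LinearMap.mem_ker, dual_eq]

lemma lin_ne {a : Fin 3 → K} (ha : a ≠ 0) : lin a ≠ 0 := by
  intro h
  apply ha
  funext i
  have := eval_lin a (Pi.single i 1)
  rw [h] at this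
  simpa [Pi.single_apply] using this.symm

lemma exists_one {a : Fin 3 → K} (ha : a ≠ 0) : ∃ e, eval e (lin a) = 1 := by
  obtain ⟨i, hi⟩ := Function.ne_iff.1 ha
  refine ⟨Pi.single i (a i)⁻¹, ?_⟩
  rw [eval_lin]
  simp only [Pi.single_apply, mul_ite, mul_zero, Finset.sum_ite_eq', Finset.mem_univ, if_true]
  exact mul_inv_cancel₀ hi

/-- a polynomial vanishing on a plane is divisible by its form -/
lemma dvd_of_vanish [Infinite K] {a : Fin 3 → K} (ha : a ≠ 0) (f : MvPolynomial (Fin 3) K)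
    (h : ∀ v, eval v (lin a) = 0 → eval v f = 0) : lin a ∣ f := by
  obtain ⟨e, he⟩ := exists_one ha
  set g : Fin 3 → MvPolynomial (Fin 3) K := fun i => X i - lin a * C (e i) with hg
  have h0 : aeval g f = 0 := by
    apply MvPolynomial.funext
    intro v
    rw [map_zero, ← coe_aeval_eq_eval, RingHom.coe_coe, ← AlgHom.comp_apply, comp_aeval,
      aeval_eq_eval]
    apply h
    have : (fun i => (aeval v) (g i)) = v - (eval v (lin a)) • e := by
      funext i
      simp [hg, aeval_eq_eval]
    simp only [aeval_eq_eval] at this ⊢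
    rw [this, eval_lin]
    rw [eval_lin] at he
    simp only [Pi.sub_apply, Pi.smul_apply, smul_eq_mul, mul_sub, Finset.sum_sub_distrib]
    rw [eval_lin, sub_eq_zero]
    have : ∀ i, a i * ((∑ i, a i * v i) * e i) = (∑ i, a i * v i) * (a i * e i) := by
      intro i; ring
    simp only [this, ← Finset.mul_sum, he, mul_one]
  rw [← Ideal.mem_span_singleton, ← Ideal.Quotient.eq_zero_iff_mem]
  have h1 : Ideal.Quotient.mkₐ K (Ideal.span {lin a}) f
      = Ideal.Quotient.mkₐ K (Ideal.span {lin a}) (aeval g f) := by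
    rw [← AlgHom.comp_apply]
    congr 1
    ext i
    simp only [AlgHom.comp_apply, aeval_X, hg, map_sub, map_mul]
    have : Ideal.Quotient.mkₐ K (Ideal.span {lin a}) (lin a) = 0 := by
      rw [Ideal.Quotient.mkₐ_eq_mk, Ideal.Quotient.eq_zero_iff_mem]
      exact Ideal.mem_span_singleton_self _
    rw [this]; simp
  rw [h0, map_zero] at h1
  exact h1

lemma hom_factor {a : Fin 3 → K} {t : ℕ} {f : MvPolynomial (Fin 3) K}
    (hf : f.IsHomogeneous (t + 1)) (h : lin a ∣ f) : ∃ g, g.IsHomogeneous t ∧ f = lin a * g := by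
  obtain ⟨g, rfl⟩ := h
  let := gradedAlgebra (σ := Fin 3) (R := K)
  refine ⟨DirectSum.decompose (homogeneousSubmodule (Fin 3) K) g t, (mem_homogeneousSubmodule _ _).1 (SetLike.coe_mem _), ?_⟩
  have h1 := DirectSum.coe_decompose_mul_add_of_left_mem (homogeneousSubmodule (Fin 3) K)
    (i := 1) (j := t) (a := lin a) (b := g) (lin_hom a)
  rw [add_comm 1 t, DirectSum.decompose_of_mem_same _ hf] at h1
  exact h1

lemma hom_factor_zero {a : Fin 3 → K} {f : MvPolynomial (Fin 3) K} (ha : a ≠ 0)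
    (hf : f.IsHomogeneous 0) (h : lin a ∣ f) : f = 0 := by
  obtain ⟨g, rfl⟩ := h
  by_contra hne
  have hg : g ≠ 0 := right_ne_zero_of_mul hne
  have := totalDegree_mul_of_isDomain (lin_ne ha) hg
  rw [hf.totalDegree hne, (lin_hom a).totalDegree (lin_ne ha)] at this
  omega

/-- homogeneous elements of the point ideal -/
lemma mem_pointIdeal {f : MvPolynomial (Fin 3) K} {t : ℕ} (hf : f.IsHomogeneous t) (p : P2 K) :
    f ∈ pointIdeal p ↔ eval p.rep f = 0 := by
  constructor
  · intro h
    have : pointIdeal p ≤ RingHom.ker (eval p.rep) := by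
      unfold pointIdeal
      rw [Ideal.span_le]
      intro x hx
      exact hx.2
    exact this h
  · intro h
    obtain ⟨i, hi⟩ := Function.ne_iff.1 p.rep_nonzero
    set v := p.rep
    set l : MvPolynomial (Fin 3) K := C (v i)⁻¹ * X i with hl
    set q := Ideal.Quotient.mkₐ K (pointIdeal p) with hq
    have hX : ∀ j, q (X j) = q (l * C (v j)) := by
      intro j
      rw [← sub_eq_zero, ← map_sub, hq, Ideal.Quotient.mkₐ_eq_mk, Ideal.Quotient.eq_zero_iff_mem]
      apply Ideal.subset_span
      refine ⟨?_, ?_⟩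
      · apply (isHomogeneous_X _ _).sub
        rw [mul_comm]
        exact (isHomogeneous_C_mul_X _ _).C_mul _
      · simp only [hl, map_sub, map_mul, eval_X, eval_C]
        change v j - (v i)⁻¹ * v i * v j = 0
        rw [inv_mul_cancel₀ hi]; ring
    have h1 : q f = q (aeval (fun j => l * C (v j)) f) := by
      rw [← AlgHom.comp_apply]
      congr 1
      ext j
      simp [hX]
    have h2 : aeval (fun j => l * C (v j)) f = l ^ t * C (eval v f) := by
      rw [aeval_def, eval₂_eq', eval_eq', map_sum, Finset.mul_sum]
      refine Finset.sum_congr rfl fun d hd => ?_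
      have h := hf (mem_support_iff.1 hd)
      have h2 : ∑ i, d i = t := by
        rw [← h]; simp [Finsupp.weight_apply, Finsupp.sum_fintype]
      simp only [mul_pow, Finset.prod_mul_distrib]
      rw [Finset.prod_pow_eq_pow_sum, h2]
      simp; ring
    rw [h2, h, map_zero, mul_zero, map_zero] at h1
    rw [← Ideal.Quotient.eq_zero_iff_mem]
    exact h1

lemma mem_points (L : ProjLine K) (p : P2 K) : p ∈ L.points ↔ p.rep ∈ L.toSubmodule := by
  change p.submodule ≤ _ ↔ _
  rw [Projectivization.submodule_eq, Submodule.span_singleton_le_iff_mem]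

lemma line_unique {L M : ProjLine K} {p q : P2 K} (hpq : p ≠ q) (h1 : p ∈ L.points)
    (h2 : q ∈ L.points) (h3 : p ∈ M.points) (h4 : q ∈ M.points) : L = M := by
  rw [mem_points] at *
  have hli := (Projectivization.linearIndependent_pair_iff_ne (K := K)).2 hpq
  have key : ∀ N : ProjLine K, p.rep ∈ N.toSubmodule → q.rep ∈ N.toSubmodule →
      Submodule.span K (Set.range ![p.rep, q.rep]) = N.toSubmodule := by
    intro N hp hq
    apply Submodule.eq_of_le_of_finrank_le
    · rw [Submodule.span_le]
      rintro x ⟨i, rfl⟩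
      fin_cases i
      · exact hp
      · exact hq
    · rw [N.finrank_eq_two, finrank_span_eq_card hli]; simp
  have h := (key L h1 h2).symm.trans (key M h3 h4)
  cases L; cases M; simpa using h

lemma line_pair {L : ProjLine K} {v w u : Fin 3 → K} (hv : v ∈ L.toSubmodule)
    (hw : w ∈ L.toSubmodule) (hu : u ∈ L.toSubmodule)
    (hli : LinearIndependent K ![v, w]) : ∃ x y : K, u = x • v + y • w := by
  have : Submodule.span K {v, w} = L.toSubmodule := by
    apply Submodule.eq_of_le_of_finrank_le
    · rw [Submodule.span_le]
      rintro x (rfl | rfl)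
      · exact hv
      · exact hw
    · rw [L.finrank_eq_two]
      have := finrank_span_eq_card hli
      rw [Matrix.range_cons, Matrix.range_cons, Matrix.range_empty, Set.union_empty] at this
      rw [Set.insert_eq, this]; simp
  rw [← this, Submodule.mem_span_pair] at hu
  obtain ⟨x, y, h⟩ := hu
  exact ⟨x, y, h.symm⟩

lemma natDegree_line {f : MvPolynomial (Fin 3) K} {t : ℕ} (hf : f.IsHomogeneous t)
    (v w : Fin 3 → K) :
    (aeval (fun i => Polynomial.C (v i) + Polynomial.X * Polynomial.C (w i)) f
      : Polynomial K).natDegree ≤ t := by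
  have := aeval_natDegree_le (n := 1) f hf.totalDegree_le
    (fun i => Polynomial.C (v i) + Polynomial.X * Polynomial.C (w i)) ?_
  · simpa using this
  · intro i
    compute_degree

lemma eval_line (f : MvPolynomial (Fin 3) K) (v w : Fin 3 → K) (x : K) :
    (aeval (fun i => Polynomial.C (v i) + Polynomial.X * Polynomial.C (w i)) f
      : Polynomial K).eval x = eval (v + x • w) f := by
  rw [← Polynomial.coe_aeval_eq_eval, ← AlgHom.comp_apply, comp_aeval,
      aeval_eq_eval]
  congr 2
  funext i
  simp
  ring

/-- Bezout for a line. -/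
lemma vanish_line [Infinite K] {L : ProjLine K} {S : Set (P2 K)} (hS : S ⊆ L.points)
    {f : MvPolynomial (Fin 3) K} {t : ℕ} (hf : f.IsHomogeneous t) (ht : t < S.ncard)
    (h0 : ∀ p ∈ S, eval p.rep f = 0) (q : Fin 3 → K) (hq : q ∈ L.toSubmodule) :
    eval q f = 0 := by
  have hSf : S.Finite := Set.finite_of_ncard_pos (by omega)
  by_cases hq0 : q = 0
  · -- use that some point is in S
    obtain ⟨p, hp⟩ : S.Nonempty := (Set.ncard_pos hSf).1 (by omega)
    have := eval_smul_hom hf 0 p.rep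
    rw [h0 p hp, zero_smul] at this
    rw [hq0, this, mul_zero]
  by_cases hqS : Projectivization.mk K q hq0 ∈ S
  · obtain ⟨a, ha⟩ := Projectivization.exists_smul_eq_mk_rep K q hq0
    have := h0 _ hqS
    rw [← ha, Units.smul_def, eval_smul_hom hf] at this
    exact (mul_eq_zero.1 this).resolve_left (pow_ne_zero _ a.ne_zero)
  have hli : ∀ p ∈ S, LinearIndependent K ![p.rep, q] := by
    intro p hp
    rw [LinearIndependent.pair_iff' p.rep_nonzero]
    intro a ha
    apply hqS
    convert hp
    conv_rhs => rw [← p.mk_rep]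
    rw [Projectivization.mk_eq_mk_iff']
    exact ⟨a, ha⟩
  obtain ⟨p0, hp0⟩ : S.Nonempty := (Set.ncard_pos hSf).1 (by omega)
  set v := p0.rep
  have hvL : v ∈ L.toSubmodule := (mem_points _ _).1 (hS hp0)
  have hdec : ∀ p : P2 K, ∃ c : K, p ∈ S → ∃ x : K, x ≠ 0 ∧ p.rep = x • (v + c • q) := by
    intro p
    by_cases hp : p ∈ S
    · obtain ⟨x, y, hxy⟩ := line_pair hvL hq ((mem_points _ _).1 (hS hp)) (hli p0 hp0)
      have hx : x ≠ 0 := by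
        rintro rfl
        have h1 := LinearIndependent.pair_iff.1 (hli p hp) 1 (-y) (by rw [hxy]; simp)
        exact one_ne_zero h1.1
      refine ⟨x⁻¹ * y, fun _ => ⟨x, hx, ?_⟩⟩
      rw [hxy, smul_add, smul_smul, mul_inv_cancel_left₀ hx]
    · exact ⟨0, fun h => absurd h hp⟩
  choose c hc using hdec
  have hinj : Set.InjOn c S := by
    intro p hp p' hp' h
    obtain ⟨x, hx, e1⟩ := hc p hp
    obtain ⟨y, hy, e2⟩ := hc p' hp'
    rw [← p.mk_rep, ← p'.mk_rep, Projectivization.mk_eq_mk_iff']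
    refine ⟨x * y⁻¹, ?_⟩
    rw [e1, e2, h, smul_smul, inv_mul_cancel_right₀ hy]
  have hz : (aeval (fun i => Polynomial.C (v i) + Polynomial.X * Polynomial.C (q i)) f
      : Polynomial K) = 0 := by
    classical
    apply Polynomial.eq_zero_of_natDegree_lt_card_of_eval_eq_zero' _ (hSf.toFinset.image c)
    · intro z hz
      simp only [Finset.mem_image, Set.Finite.mem_toFinset] at hz
      obtain ⟨p, hp, rfl⟩ := hz
      rw [eval_line]
      obtain ⟨x, hx, e⟩ := hc p hp
      have := h0 p hp
      rw [e, eval_smul_hom hf] at this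
      exact (mul_eq_zero.1 this).resolve_left (pow_ne_zero _ hx)
    · rw [Finset.card_image_of_injOn (by simpa using hinj), ← Set.ncard_eq_toFinset_card S hSf]
      exact (natDegree_line hf _ _).trans_lt ht
  have hz2 : (aeval (fun i => Polynomial.C (q i) + Polynomial.X * Polynomial.C (v i)) f
      : Polynomial K) = 0 := by
    apply Polynomial.eq_zero_of_infinite_isRoot
    apply (Set.Finite.infinite_compl (Set.finite_singleton (0 : K))).mono
    intro x hx
    have hx : x ≠ 0 := hx
    change Polynomial.eval _ _ = 0
    rw [eval_line]
    have h1 := eval_line f v q x⁻¹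
    rw [hz, Polynomial.eval_zero] at h1
    have h2 := eval_smul_hom hf x (v + x⁻¹ • q)
    rw [← h1, smul_add, smul_smul, mul_inv_cancel₀ hx, one_smul, mul_zero, add_comm] at h2
    exact h2
  have := eval_line f q v 0
  rw [hz2] at this
  simpa using this.symm

lemma finrank_hom (t : ℕ) :
    Module.finrank K (homogeneousSubmodule (Fin 3) K t) = (t + 2).choose 2 := by
  classical
  have e : homogeneousSubmodule (Fin 3) K t = Submodule.span K (Set.range
      fun d : (Finset.univ : Finset (Fin 3)).finsuppAntidiag t =>
        (monomial d.1 (1 : K) : MvPolynomial (Fin 3) K)) := by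
    apply le_antisymm
    · intro f hf
      rw [f.as_sum]
      refine Submodule.sum_mem _ fun d hd => ?_
      have h := hf (mem_support_iff.1 hd)
      have h2 : ∑ i, d i = t := by
        rw [← h]; simp [Finsupp.weight_apply, Finsupp.sum_fintype]
      have : monomial d (coeff d f) = coeff d f • (monomial d (1 : K)) := by
        rw [smul_monomial, smul_eq_mul, mul_one]
      rw [this]
      apply Submodule.smul_mem
      apply Submodule.subset_span
      exact ⟨⟨d, by simp [Finset.mem_finsuppAntidiag, h2]⟩, rfl⟩
    · rw [Submodule.span_le]
      rintro _ ⟨d, rfl⟩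
      apply isHomogeneous_monomial
      have := (Finset.mem_finsuppAntidiag.1 d.2).1
      rw [Finsupp.degree_eq_sum]
      exact this
  have hli : LinearIndependent K
      fun d : (Finset.univ : Finset (Fin 3)).finsuppAntidiag t =>
        (monomial d.1 (1 : K) : MvPolynomial (Fin 3) K) := by
    have := (basisMonomials (Fin 3) K).linearIndependent
    rw [coe_basisMonomials] at this
    exact this.comp _ Subtype.val_injective
  rw [e, finrank_span_eq_card hli, Fintype.card_coe, Finset.card_finsuppAntidiag_nat_eq_choose]
  simp only [Finset.card_univ, Fintype.card_fin]
  rw [show 3 + t - 1 = t + 2 by omega, Nat.choose_symm_add]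

instance (t : ℕ) : FiniteDimensional K (homogeneousSubmodule (Fin 3) K t) :=
  Module.Finite.iff_fg.2 (homogeneousSubmodule_fg _ _ t)

/-- forms of degree `t` vanishing on `Z` -/
noncomputable def V (Z : Set (P2 K)) (t : ℕ) : Submodule K (MvPolynomial (Fin 3) K) where
  carrier := {f | f.IsHomogeneous t ∧ ∀ p ∈ Z, eval p.rep f = 0}
  add_mem' := by
    rintro a b ⟨h1, h2⟩ ⟨h3, h4⟩
    exact ⟨h1.add h3, fun p hp => by rw [map_add, h2 p hp, h4 p hp, add_zero]⟩
  zero_mem' := ⟨isHomogeneous_zero _ _ _, fun p hp => map_zero _⟩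
  smul_mem' := by
    rintro c a ⟨h1, h2⟩
    refine ⟨?_, fun p hp => by rw [smul_eval, h2 p hp, mul_zero]⟩
    rw [smul_eq_C_mul]; exact h1.C_mul c

lemma V_le (Z : Set (P2 K)) (t : ℕ) : V Z t ≤ homogeneousSubmodule (Fin 3) K t :=
  fun _ h => h.1

instance (Z : Set (P2 K)) (t : ℕ) : FiniteDimensional K (V Z t) :=
  Submodule.finiteDimensional_of_le (V_le Z t)

lemma fat_eq (Z : Set (P2 K)) (t : ℕ) :
    Submodule.restrictScalars K (fatIdeal Z 1 : Submodule (MvPolynomial (Fin 3) K)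
      (MvPolynomial (Fin 3) K)) ⊓ homogeneousSubmodule (Fin 3) K t = V Z t := by
  ext f
  rw [Submodule.mem_inf, Submodule.restrictScalars_mem, and_comm]
  change f.IsHomogeneous t ∧ _ ↔ f.IsHomogeneous t ∧ _
  refine and_congr_right fun hf => ?_
  simp only [fatIdeal, pow_one, Submodule.mem_iInf]
  exact forall₂_congr fun p _ => mem_pointIdeal hf p

/-- Hilbert function over the integers -/
noncomputable def h (Z : Set (P2 K)) (t : ℕ) : ℤ :=
  ((t + 2).choose 2 : ℕ) - (Module.finrank K (V Z t) : ℤ)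

lemma hilb_eq (Z : Set (P2 K)) (t : ℕ) : (hilb (fatIdeal Z 1) t : ℤ) = h Z t := by
  unfold hilb h
  rw [fat_eq, ← finrank_hom (K := K), Nat.cast_sub]
  exact Submodule.finrank_mono (V_le Z t)

lemma h_nonneg (Z : Set (P2 K)) (t : ℕ) : 0 ≤ h Z t := by
  rw [← hilb_eq]; positivity

lemma finrank_map_mul {a : Fin 3 → K} (ha : a ≠ 0) (W : Submodule K (MvPolynomial (Fin 3) K)) :
    Module.finrank K (W.map (LinearMap.mulLeft K (lin a))) = Module.finrank K W :=
  (LinearEquiv.finrank_eq (Submodule.equivMapOfInjective _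
    (fun _ _ hxy => mul_left_cancel₀ (lin_ne ha) hxy) W)).symm

lemma h_mono [Infinite K] {Z : Set (P2 K)} (hZ : Z.Finite) (t : ℕ) : h Z t ≤ h Z (t + 1) := by
  have := hZ.to_subtype
  obtain ⟨φ, hφ⟩ := Module.exists_dual_forall_apply_ne_zero (K := K)
    (fun p : Option Z => p.elim (Pi.single (0 : Fin 3) (1 : K)) (fun p => p.1.rep)) (by
      rintro (_ | p)
      · simp
      · exact p.1.rep_nonzero)
  set a : Fin 3 → K := fun i => φ (Pi.single i 1) with ha'
  have ha : a ≠ 0 := by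
    intro h0
    exact hφ none (congrFun h0 0)
  have hne : ∀ p ∈ Z, eval p.rep (lin a) ≠ 0 := by
    intro p hp
    rw [← dual_eq]
    exact hφ (some ⟨p, hp⟩)
  set B := (homogeneousSubmodule (Fin 3) K t).map (LinearMap.mulLeft K (lin a)) with hB
  have hBle : B ≤ homogeneousSubmodule (Fin 3) K (t + 1) := by
    rintro _ ⟨g, hg, rfl⟩
    rw [add_comm]
    exact (lin_hom a).mul hg
  have hinf : V Z (t + 1) ⊓ B ≤ (V Z t).map (LinearMap.mulLeft K (lin a)) := by
    rintro _ ⟨hf, g, hg, rfl⟩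
    refine ⟨g, ⟨hg, fun p hp => ?_⟩, rfl⟩
    have := hf.2 p hp
    rw [LinearMap.mulLeft_apply, map_mul] at this
    exact (mul_eq_zero.1 this).resolve_left (hne p hp)
  have : FiniteDimensional K B := Submodule.finiteDimensional_of_le hBle
  have h1 := Submodule.finrank_sup_add_finrank_inf_eq (V Z (t + 1)) B
  have h2 : Module.finrank K ↥(V Z (t + 1) ⊓ B) ≤ _ := Submodule.finrank_mono hinf
  have h3 : Module.finrank K ↥(V Z (t + 1) ⊔ B) ≤ _ :=
    Submodule.finrank_mono (sup_le (V_le Z (t + 1)) hBle)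
  rw [finrank_map_mul ha] at h2
  have h4 : Module.finrank K B = _ := finrank_map_mul ha _
  rw [h4, finrank_hom] at h1
  rw [finrank_hom] at h3
  unfold h
  omega

lemma V_zero [Infinite K] {L : ProjLine K} {Z S : Set (P2 K)} (hSZ : S ⊆ Z) (hS : S ⊆ L.points)
    (ht : 0 < S.ncard) : Module.finrank K (V Z 0) = 0 := by
  rw [Submodule.finrank_eq_zero, eq_bot_iff]
  intro f hf
  obtain ⟨a, ha, hL⟩ := exists_form L
  exact hom_factor_zero ha hf.1 (dvd_of_vanish ha f fun v hv =>
    vanish_line hS hf.1 ht (fun p hp => hf.2 p (hSZ hp)) v ((hL v).2 hv))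

lemma V_succ [Infinite K] {L : ProjLine K} {Y S : Set (P2 K)} (hS : S ⊆ L.points)
    (hY : ∀ p ∈ Y, p ∉ L.points) {t : ℕ}
    (ht : t + 1 < S.ncard) :
    Module.finrank K (V (Y ∪ S) (t + 1)) = Module.finrank K (V Y t) := by
  obtain ⟨a, ha, hL⟩ := exists_form L
  rw [← finrank_map_mul ha (V Y t)]
  suffices hV : V (Y ∪ S) (t + 1) = (V Y t).map (LinearMap.mulLeft K (lin a)) by rw [hV]
  ext f
  constructor
  · intro hf
    obtain ⟨g, hg, rfl⟩ := hom_factor hf.1 (dvd_of_vanish ha f fun v hv =>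
      vanish_line hS hf.1 ht (fun p hp => hf.2 p (Or.inr hp)) v ((hL v).2 hv))
    refine ⟨g, ⟨hg, fun p hp => ?_⟩, rfl⟩
    have := hf.2 p (Or.inl hp)
    rw [map_mul] at this
    refine (mul_eq_zero.1 this).resolve_left fun h0 => hY p hp ?_
    exact (mem_points _ _).2 ((hL _).2 h0)
  · rintro ⟨g, hg, rfl⟩
    refine ⟨?_, ?_⟩
    · rw [add_comm]; exact (lin_hom a).mul hg.1
    · intro p hp
      rw [LinearMap.mulLeft_apply, map_mul]
      rcases hp with hp | hp
      · rw [hg.2 p hp, mul_zero]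
      · rw [(hL _).1 ((mem_points _ _).1 (hS hp)), zero_mul]

/-- first difference -/
noncomputable def dh (Z : Set (P2 K)) : ℕ → ℤ
  | 0 => h Z 0
  | t + 1 => h Z (t + 1) - h Z t

lemma delta_eq (Z : Set (P2 K)) (t : ℕ) : deltaHilb (fatIdeal Z 1) (t : ℤ) = dh Z t := by
  unfold deltaHilb hilbZ
  cases t with
  | zero => simp [dh, hilb_eq]
  | succ t =>
    have : ¬ ((t : ℤ) + 1 < 0) := by omega
    simp [dh, this, hilb_eq]

lemma dh_nonneg [Infinite K] {Z : Set (P2 K)} (hZ : Z.Finite) (t : ℕ) : 0 ≤ dh Z t := by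
  cases t with
  | zero => exact h_nonneg Z 0
  | succ t => exact sub_nonneg.2 (h_mono hZ t)

lemma dh_zero [Infinite K] {L : ProjLine K} {Z S : Set (P2 K)} (hSZ : S ⊆ Z) (hS : S ⊆ L.points)
    (ht : 0 < S.ncard) : dh Z 0 = 1 := by
  simp [dh, h, V_zero hSZ hS ht]

lemma choose_two (t : ℕ) : (t + 1).choose 2 = t + t.choose 2 := by
  rw [Nat.choose_succ_succ' t 1]; simp

lemma dh_succ [Infinite K] {L : ProjLine K} {Y S : Set (P2 K)} (hS : S ⊆ L.points)
    (hY : ∀ p ∈ Y, p ∉ L.points) {t : ℕ}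
    (ht : t + 1 < S.ncard) : dh (Y ∪ S) (t + 1) = 1 + dh Y t := by
  have h1 := V_succ hS hY ht
  cases t with
  | zero =>
    have h2 := V_zero (Set.subset_union_right (s := Y)) hS (by omega)
    simp [dh, h, h1, h2, Nat.choose]
    ring
  | succ t =>
    have h2 := V_succ hS hY (t := t) (by omega)
    have c1 := choose_two (t + 3)
    have c2 := choose_two (t + 2)
    simp only [dh, h, h1, h2]
    push_cast [show t + 1 + 1 + 2 = t + 3 + 1 by ring, c1, show t + 1 + 2 = t + 3 by ring, c2]
    ring

lemma tail [Infinite K] {s : ℕ} {X : Set (P2 K)} {d : Fin s → ℕ}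
    {Xs : Fin s → Set (P2 K)} {Ls : Fin s → ProjLine K}
    (hX : IsKConfig X d Xs Ls) (r : ℕ) : ∀ k t : ℕ, r ≤ k → k ≤ s → r ≤ t + 1 →
    (∀ i : Fin s, i.1 < k → k ≤ i.1 + r → t < d i + (k - 1 - i.1)) →
    (r : ℤ) ≤ dh (⋃ i : Fin s, ⋃ _ : i.1 < k, Xs i) t := by
  have hfin : ∀ i, (Xs i).Finite := fun i => Set.finite_of_ncard_pos (by
    rw [hX.card_eq]; exact hX.one_le i)
  induction r with
  | zero =>
    intro k t _ _ _ _
    simp only [Nat.cast_zero]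
    apply dh_nonneg
    exact Set.finite_iUnion fun i => Set.finite_iUnion fun _ => hfin i
  | succ r ih =>
    intro k t hrk hks hrt hd
    obtain ⟨k, rfl⟩ : ∃ k', k = k' + 1 := ⟨k - 1, by omega⟩
    have hk : t < d ⟨k, hks⟩ := by
      have := hd ⟨k, hks⟩ (by simp) (by simp)
      simpa using this
    have hU : (⋃ i : Fin s, ⋃ _ : i.1 < k + 1, Xs i)
        = (⋃ i : Fin s, ⋃ _ : i.1 < k, Xs i) ∪ Xs ⟨k, hks⟩ := by
      ext p
      simp only [Set.mem_iUnion, Set.mem_union, exists_prop]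
      constructor
      · rintro ⟨i, hi, hp⟩
        rcases Nat.lt_succ_iff_lt_or_eq.1 hi with h | h
        · exact Or.inl ⟨i, h, hp⟩
        · right; subst h; exact hp
      · rintro (⟨i, hi, hp⟩ | hp)
        · exact ⟨i, by omega, hp⟩
        · exact ⟨_, by simp, hp⟩
    rw [hU]
    rw [← hX.card_eq] at hk
    cases t with
    | zero =>
      rw [dh_zero Set.subset_union_right (hX.subset_line _) hk]
      have : r = 0 := by omega
      simp [this]
    | succ t =>
      rw [dh_succ (hX.subset_line _) _ hk]
      · have := ih k t (by omega) (by omega) (by omega) (by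
          intro i hi hi2
          have := hd i (by omega) (by omega)
          omega)
        push_cast; linarith
      · intro p hp
        simp only [Set.mem_iUnion, exists_prop] at hp
        obtain ⟨i, hi, hp⟩ := hp
        exact hX.not_mem _ i hi p hp

lemma inter_le_one {L M : ProjLine K} (hLM : L ≠ M) (X : Finset (P2 K)) [DecidableEq (P2 K)]
    [∀ (L : ProjLine K) p, Decidable (p ∈ L.points)] :
    (X.filter (fun p => p ∈ L.points ∧ p ∈ M.points)).card ≤ 1 := by
  rw [Finset.card_le_one]
  intro p hp q hq
  by_contra hpq
  simp only [Finset.mem_filter] at hp hq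
  exact hLM (line_unique hpq hp.2.1 hq.2.1 hp.2.2 hq.2.2)

lemma count_lines (X : Finset (P2 K)) (F : Finset (ProjLine K)) (s : ℕ) (hs : 2 ≤ s)
    (hXc : 2 * X.card ≤ s * (s + 1))
    (hF : ∀ L ∈ F, ((X : Set (P2 K)) ∩ L.points).ncard = s) : F.card ≤ s + 1 := by
  classical
  have hF' : ∀ L ∈ F, (X.filter (fun p => p ∈ L.points)).card = s := by
    intro L hL
    rw [← hF L hL, ← Set.ncard_coe_finset]
    congr 1
    ext p; simp
  set m : P2 K → ℕ := fun p => (F.filter (fun L => p ∈ L.points)).card with hm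
  have h1 : ∑ p ∈ X, m p = F.card * s := by
    simp only [hm, Finset.card_filter]
    rw [Finset.sum_comm]
    simp only [← Finset.card_filter]
    rw [Finset.sum_congr rfl hF', Finset.sum_const, smul_eq_mul]
  have h2 : ∑ p ∈ X, m p ^ 2
      = ∑ L ∈ F, ∑ M ∈ F, (X.filter (fun p => p ∈ L.points ∧ p ∈ M.points)).card := by
    simp only [hm, Finset.card_filter, sq, Finset.sum_mul_sum]
    rw [Finset.sum_comm]
    refine Finset.sum_congr rfl fun L _ => ?_
    rw [Finset.sum_comm]
    refine Finset.sum_congr rfl fun M _ => ?_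
    refine Finset.sum_congr rfl fun p _ => ?_
    by_cases a : p ∈ L.points <;> by_cases b : p ∈ M.points <;> simp [a, b]
  have h3 : ∀ L ∈ F, ∑ M ∈ F, (X.filter (fun p => p ∈ L.points ∧ p ∈ M.points)).card
      ≤ s + (F.card - 1) := by
    intro L hL
    rw [← Finset.add_sum_erase F _ hL]
    simp only [and_self]
    rw [hF' L hL]
    apply Nat.add_le_add_left
    rw [← Finset.card_erase_of_mem hL]
    refine (Finset.sum_le_card_nsmul _ _ 1 fun M hM => ?_).trans (by simp)
    exact inter_le_one (Finset.ne_of_mem_erase hM).symm X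
  have h4 : ∑ p ∈ X, m p ^ 2 ≤ F.card * (s + (F.card - 1)) := by
    rw [h2]
    exact (Finset.sum_le_card_nsmul _ _ _ h3).trans (by simp)
  have h5 : (∑ p ∈ X, m p) ^ 2 ≤ X.card * ∑ p ∈ X, m p ^ 2 := sq_sum_le_card_mul_sum_sq
  rw [h1] at h5
  by_contra hcon
  obtain ⟨n, hn⟩ : ∃ n, F.card = s + 2 + n := ⟨F.card - (s + 2), by omega⟩
  rw [hn] at h4 h5
  rw [show s + 2 + n - 1 = s + 1 + n by omega] at h4
  have h6 : 2 * ((s + 2 + n) * s) ^ 2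
      ≤ s * (s + 1) * ((s + 2 + n) * (s + (s + 1 + n))) := by
    calc _ ≤ 2 * (X.card * ∑ p ∈ X, m p ^ 2) := by omega
      _ = (2 * X.card) * ∑ p ∈ X, m p ^ 2 := by ring
      _ ≤ _ := Nat.mul_le_mul hXc h4
  have h7 : (s * (s + 2 + n)) * (2 * ((s + 2 + n) * s))
      ≤ (s * (s + 2 + n)) * ((s + 1) * (s + (s + 1 + n))) := by
    calc _ = 2 * ((s + 2 + n) * s) ^ 2 := by ring
      _ ≤ _ := h6
      _ = _ := by ring
  have h8 := Nat.le_of_mul_le_mul_left h7 (by positivity)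
  nlinarith

end KCfg

/-- **Remark (reduced Hilbert function bound).** For a k-configuration `X` of
type `(d₁,…,d_s) ≠ (1)`, the number of lines containing exactly `d_s` points of
`X` is at most `ΔH_X(d_s − 1) + 1`. -/
theorem kconfig_reduced_bound {K : Type} [Field K] [IsAlgClosed K] {s : ℕ} (hs : 0 < s)
    (X : Set (P2 K)) (d : Fin s → ℕ) (Xs : Fin s → Set (P2 K)) (Ls : Fin s → ProjLine K)
    (hX : IsKConfig X d Xs Ls)
    (ds : ℕ) (hds : ds = d ⟨s - 1, Nat.sub_lt hs Nat.one_pos⟩)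
    (hne : ¬ (s = 1 ∧ ds = 1)) :
    {L : ProjLine K | (X ∩ L.points).ncard = ds}.Finite ∧
      ({L : ProjLine K | (X ∩ L.points).ncard = ds}.ncard : ℤ) ≤
        deltaHilb (fatIdeal X 1) ((ds : ℤ) - 1) + 1 := by
  classical
  have : Infinite K := IsAlgClosed.instInfinite
  have hfin : ∀ i, (Xs i).Finite := fun i => Set.finite_of_ncard_pos (by
    rw [hX.card_eq]; exact hX.one_le i)
  set last : Fin s := ⟨s - 1, Nat.sub_lt hs Nat.one_pos⟩ with hlast
  have hgap : ∀ n : ℕ, ∀ i j : Fin s, j.1 = i.1 + n → d i + n ≤ d j := by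
    intro n
    induction n with
    | zero =>
      intro i j hij
      have : i = j := Fin.ext (by omega)
      rw [this]; simp
    | succ n ih =>
      intro i j hij
      have h1 := ih i ⟨i.1 + n, by omega⟩ rfl
      have h2 : d ⟨i.1 + n, by omega⟩ < d j := hX.strictMono (by
        rw [Fin.lt_def]; simp only; omega)
      omega
  have hge : ∀ i : Fin s, i.1 + 1 ≤ d i := by
    intro i
    have h1 := hgap i.1 ⟨0, hs⟩ i (by simp)
    have h2 := hX.one_le ⟨0, hs⟩
    omega
  have hle : ∀ i : Fin s, d i + (s - 1 - i.1) ≤ ds := by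
    intro i
    rw [hds]
    exact hgap _ i last (by rw [hlast]; simp only; omega)
  have hsd : s ≤ ds := by
    have := hge last
    rw [hds]
    simp only [hlast] at this ⊢
    omega
  have hXU : X = ⋃ i : Fin s, ⋃ _ : i.1 < s, Xs i := by
    rw [hX.union_eq]
    simp
  have hXfin : X.Finite := by
    rw [hX.union_eq]; exact Set.finite_iUnion hfin
  have hdelta : deltaHilb (fatIdeal X 1) ((ds : ℤ) - 1) = KCfg.dh X (ds - 1) := by
    rw [← KCfg.delta_eq]
    congr 1
    omega
  rw [hdelta]
  have htail : ∀ r : ℕ, r ≤ s → (∀ i : Fin s, s ≤ i.1 + r → ds ≤ d i + (s - 1 - i.1)) →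
      (r : ℤ) ≤ KCfg.dh X (ds - 1) := by
    intro r hr hri
    rw [hXU]
    refine KCfg.tail hX r s (ds - 1) hr le_rfl (by omega) ?_
    intro i _ hi
    have := hri i hi
    omega
  rcases hsd.eq_or_lt with hsd | hsd
  · -- type (1, ..., s)
    have hs2 : 2 ≤ s := by
      by_contra h
      exact hne (by omega)
    have hcard : 2 * hXfin.toFinset.card ≤ s * (s + 1) := by
      have h1 : hXfin.toFinset = Finset.univ.biUnion fun i => (hfin i).toFinset := by
        ext p; simp [hX.union_eq]
      have h2 : hXfin.toFinset.card ≤ ∑ i : Fin s, (i.1 + 1) := by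
        rw [h1]
        refine Finset.card_biUnion_le.trans (Finset.sum_le_sum fun i _ => ?_)
        rw [← Set.ncard_eq_toFinset_card _ (hfin i), hX.card_eq]
        have := hle i
        omega
      rw [Fin.sum_univ_eq_sum_range (fun i => i + 1) s, Finset.sum_add_distrib] at h2
      have h3 := Finset.sum_range_id_mul_two s
      simp only [Finset.sum_const, Finset.card_range, smul_eq_mul, mul_one] at h2
      obtain ⟨k, rfl⟩ : ∃ k, s = k + 1 := ⟨s - 1, by omega⟩
      simp only [Nat.add_sub_cancel] at h3
      nlinarith
    have hall : ∀ F : Finset (ProjLine K),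
        (F : Set (ProjLine K)) ⊆ {L : ProjLine K | (X ∩ L.points).ncard = ds} →
        F.card ≤ s + 1 := by
      intro F hF
      apply KCfg.count_lines hXfin.toFinset F s hs2 hcard
      intro L hL
      rw [hXfin.coe_toFinset, hsd]
      exact hF hL
    have hgf : {L : ProjLine K | (X ∩ L.points).ncard = ds}.Finite := by
      by_contra hinf
      obtain ⟨F, hF, hc⟩ := Set.Infinite.exists_subset_card_eq hinf (s + 2)
      have := hall F hF
      omega
    refine ⟨hgf, ?_⟩
    have h1 := hall hgf.toFinset (by simp)
    rw [← Set.ncard_eq_toFinset_card _ hgf] at h1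
    have h2 := htail s le_rfl (by
      intro i _
      have := hge i
      omega)
    have h3 : ({L : ProjLine K | (X ∩ L.points).ncard = ds}.ncard : ℤ) ≤ s + 1 := by
      exact_mod_cast h1
    linarith
  · -- all the lines are among the given ones
    have hmeet : ∀ L : ProjLine K, ∀ i, L ≠ Ls i → (Xs i ∩ L.points).ncard ≤ 1 := by
      intro L i hLi
      rw [Set.ncard_le_one ((hfin i).inter_of_left _)]
      intro p hp q hq
      by_contra hpq
      exact hLi (KCfg.line_unique hpq hp.2 hq.2 (hX.subset_line i hp.1) (hX.subset_line i hq.1))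
    have hsum : ∀ L : ProjLine K, (X ∩ L.points).ncard ≤ ∑ i, (Xs i ∩ L.points).ncard := by
      intro L
      rw [hX.union_eq, Set.iUnion_inter]
      have := Set.ncard_iUnion_le_of_fintype (fun i => Xs i ∩ L.points)
      exact this
    have hgood : ∀ L : ProjLine K, (X ∩ L.points).ncard = ds →
        ∃ i : Fin s, L = Ls i ∧ ds ≤ d i + (s - 1 - i.1) := by
      intro L hL
      have h1 := hsum L
      rw [hL] at h1
      by_cases hex : ∃ i, L = Ls i
      · obtain ⟨i, rfl⟩ := hex
        refine ⟨i, rfl, h1.trans ?_⟩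
        have hb : ∀ j ∈ Finset.univ, (Xs j ∩ (Ls i).points).ncard
            ≤ (if j = i then d i else 0) + (if i < j then 1 else 0) := by
          intro j _
          rcases lt_trichotomy j i with h | h | h
          · have : Xs j ∩ (Ls i).points = ∅ := by
              ext p
              simp only [Set.mem_inter_iff, Set.mem_empty_iff_false, iff_false, not_and]
              exact fun hp => hX.not_mem i j h p hp
            rw [this]; simp
          · subst h
            simp only [if_true, lt_irrefl, if_false, add_zero]
            rw [← hX.card_eq]
            exact Set.ncard_le_ncard Set.inter_subset_left (hfin _)
          · rw [if_pos h]
            refine (hmeet (Ls i) j fun e => ?_).trans (by omega)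
            exact h.ne (hX.lines_distinct e)
        refine (Finset.sum_le_sum hb).trans ?_
        rw [Finset.sum_add_distrib, Finset.sum_ite_eq' Finset.univ i, ← Finset.card_filter]
        simp only [Finset.mem_univ, if_true]
        have : Finset.univ.filter (fun j => i < j) = Finset.Ioi i := by ext; simp
        rw [this, Fin.card_Ioi]
      · push Not at hex
        exfalso
        have : ∑ i, (Xs i ∩ L.points).ncard ≤ ∑ i : Fin s, 1 :=
          Finset.sum_le_sum fun i _ => hmeet L i (hex i)
        simp at this
        omega
    set T : Finset (Fin s) := Finset.univ.filter fun i => ds ≤ d i + (s - 1 - i.1) with hT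
    have hsub : {L : ProjLine K | (X ∩ L.points).ncard = ds} ⊆ ((T.image Ls : Finset _) : Set _) := by
      intro L hL
      obtain ⟨i, rfl, hi⟩ := hgood L hL
      simp only [Finset.coe_image, Set.mem_image]
      exact ⟨i, by simp [hT, hi], rfl⟩
    refine ⟨(Finset.finite_toSet _).subset hsub, ?_⟩
    have hn := Set.ncard_le_ncard hsub (Finset.finite_toSet _)
    rw [Set.ncard_coe_finset] at hn
    have hn2 := hn.trans Finset.card_image_le
    have hlT : last ∈ T := by
      simp [hT, hds]
    obtain ⟨i0, hi0, hmin⟩ := Finset.exists_min_image T id ⟨last, hlT⟩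
    have hTc : T.card ≤ s - i0.1 := by
      rw [← Fin.card_Ici]
      apply Finset.card_le_card
      intro j hj
      simpa using hmin j hj
    have hr := htail (s - i0.1) (by omega) (by
      intro i hi
      have h1 := hgap (i.1 - i0.1) i0 i (by omega)
      have h2 : ds ≤ d i0 + (s - 1 - i0.1) := by simpa [hT] using hi0
      omega)
    have h3 : ({L : ProjLine K | (X ∩ L.points).ncard = ds}.ncard : ℤ) ≤ (s - i0.1 : ℕ) := by
      exact_mod_cast hn2.trans hTc
    linarith
end

section
/- Let X ⊆ P² be a k-configuration of type (d₁,…,d_s) with d_s > s, and suppose there are exactly r lines in P² containing exactly d_s points of X. Then for every integer m ≥ 2, ΔH_{mX}(m·d_s − 1) = r. -/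
section KC

open MvPolynomial

variable {K : Type} [Field K]

/-- Substitution of coordinates with respect to a basis. -/
noncomputable def kcA (b : Module.Basis (Fin 3) K (Fin 3 → K)) :
    MvPolynomial (Fin 3) K →ₐ[K] MvPolynomial (Fin 3) K :=
  aeval (fun i => ∑ j, C (b j i) * X j)

/-- The linear form dual to the `j`-th basis vector. -/
noncomputable def kcForm (b : Module.Basis (Fin 3) K (Fin 3 → K)) (j : Fin 3) :
    MvPolynomial (Fin 3) K :=
  ∑ i, C (b.coord j (Pi.single i 1)) * X i

/-- The inverse substitution. -/
noncomputable def kcB (b : Module.Basis (Fin 3) K (Fin 3 → K)) :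
    MvPolynomial (Fin 3) K →ₐ[K] MvPolynomial (Fin 3) K :=
  aeval (kcForm b)

lemma kcForm_hom (b : Module.Basis (Fin 3) K (Fin 3 → K)) (j : Fin 3) :
    (kcForm b j).IsHomogeneous 1 :=
  IsHomogeneous.sum _ _ _ fun i _ => isHomogeneous_C_mul_X _ i

lemma kcForm_eval (b : Module.Basis (Fin 3) K (Fin 3 → K)) (j : Fin 3) (x : Fin 3 → K) :
    eval x (kcForm b j) = b.coord j x := by
  have h : x = ∑ i, x i • (Pi.single i 1 : Fin 3 → K) := by
    ext k; simp [Finset.sum_apply, Pi.single_apply]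
  conv_rhs => rw [h]
  simp only [kcForm, map_sum, map_mul, eval_C, eval_X, map_smul, smul_eq_mul]
  exact Finset.sum_congr rfl fun i _ => mul_comm _ _

lemma kcBA (b : Module.Basis (Fin 3) K (Fin 3 → K)) (f : MvPolynomial (Fin 3) K) :
    kcB b (kcA b f) = f := by
  have : (kcB b).comp (kcA b) = AlgHom.id K _ := by
    apply MvPolynomial.algHom_ext
    intro i
    simp only [kcA, kcB, AlgHom.comp_apply, aeval_X, map_sum, map_mul, AlgHom.id_apply]
    have h1 : ∀ j, aeval (kcForm b) (C (b j i)) = (C (b j i) : MvPolynomial (Fin 3) K) := by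
      intro j; simp [algebraMap_eq]
    simp only [h1, kcForm, Finset.mul_sum]
    rw [Finset.sum_comm]
    have h2 : ∀ k, ∑ j, (C (b j i) : MvPolynomial (Fin 3) K) *
        (C (b.coord j (Pi.single k 1)) * X k) = C ((Pi.single k 1 : Fin 3 → K) i) * X k := by
      intro k
      conv_rhs => rw [← b.sum_repr (Pi.single k 1)]
      simp only [Finset.sum_apply, Pi.smul_apply, smul_eq_mul, map_sum, map_mul, Finset.sum_mul,
        Module.Basis.coord_apply]
      exact Finset.sum_congr rfl fun j _ => by ring
    simp only [h2, Pi.single_apply]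
    simp
  exact DFunLike.congr_fun this f

lemma kcA_form (b : Module.Basis (Fin 3) K (Fin 3 → K)) (j : Fin 3) :
    kcA b (kcForm b j) = X j := by
  simp only [kcA, kcForm, map_sum, map_mul, aeval_X]
  have h1 : ∀ c : K, aeval (fun i => ∑ j, C (b j i) * X j) (C c)
      = (C c : MvPolynomial (Fin 3) K) := by
    intro j; simp [algebraMap_eq]
  simp only [h1, Finset.mul_sum]
  rw [Finset.sum_comm]
  have h2 : ∀ k, ∑ i, (C (b.coord j (Pi.single i 1)) : MvPolynomial (Fin 3) K) *
        (C (b k i) * X k) = C (b.coord j (b k)) * X k := by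
    intro k
    rw [← kcForm_eval]
    simp only [kcForm, map_sum, map_mul, eval_C, eval_X, Finset.sum_mul]
    exact Finset.sum_congr rfl fun j _ => by ring
  simp only [h2]
  simp [Finsupp.single_apply]

lemma kcA_hom (b : Module.Basis (Fin 3) K (Fin 3 → K)) {f : MvPolynomial (Fin 3) K} {t : ℕ}
    (hf : f.IsHomogeneous t) : (kcA b f).IsHomogeneous t := by
  have := hf.aeval (fun i => ∑ j, C (b j i) * X j) (n := 1)
    (fun i => IsHomogeneous.sum _ _ _ fun j _ => isHomogeneous_C_mul_X _ j)
  simpa [kcA] using this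

/-- Grading by the degree in the first two variables. -/
noncomputable def kcT : MvPolynomial (Fin 3) K →ₐ[K] Polynomial (MvPolynomial (Fin 3) K) :=
  aeval ![Polynomial.X * Polynomial.C (X 0), Polynomial.X * Polynomial.C (X 1),
    Polynomial.C (X 2)]

lemma kcT_monomial (e : Fin 3 →₀ ℕ) (c : K) :
    kcT (monomial e c) = Polynomial.monomial (e 0 + e 1) (monomial e c) := by
  rw [kcT, aeval_monomial, Finsupp.prod_fintype _ _ (by simp), Fin.prod_univ_three,
    monomial_eq (s := e), Finsupp.prod_fintype _ _ (by simp), Fin.prod_univ_three,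
    ← Polynomial.C_mul_X_pow_eq_monomial]
  have : algebraMap K (Polynomial (MvPolynomial (Fin 3) K)) c = Polynomial.C (C c) := rfl
  rw [this]
  simp only [Matrix.cons_val_zero, Matrix.cons_val_one, Matrix.cons_val, mul_pow, map_mul, map_pow]
  ring

lemma kcT_coeff (g : MvPolynomial (Fin 3) K) (e : Fin 3 →₀ ℕ) (n : ℕ) :
    coeff e ((kcT g).coeff n) = if e 0 + e 1 = n then coeff e g else 0 := by
  induction g using MvPolynomial.induction_on' with
  | monomial u a =>
    rw [kcT_monomial, Polynomial.coeff_monomial]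
    by_cases h : u = e
    · subst h
      split_ifs <;> simp
    · split_ifs <;> simp [coeff_monomial, h]
  | add p q hp hq =>
    rw [map_add, Polynomial.coeff_add, coeff_add, hp, hq, coeff_add]
    split_ifs <;> simp

lemma kcT_dvd (g : MvPolynomial (Fin 3) K) (m : ℕ) :
    Polynomial.X ^ m ∣ kcT g ↔ ∀ e : Fin 3 →₀ ℕ, e 0 + e 1 < m → coeff e g = 0 := by
  rw [Polynomial.X_pow_dvd_iff]
  constructor
  · intro h e he
    have := kcT_coeff g e (e 0 + e 1)
    rw [h _ he] at this
    simpa using this.symm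
  · intro h n hn
    ext e
    rw [kcT_coeff, coeff_zero]
    split_ifs with h1
    · exact h e (by omega)
    · rfl

lemma kc_linear {h : MvPolynomial (Fin 3) K} (hh : h.IsHomogeneous 1) :
    ∃ c : Fin 3 → K, h = ∑ i, C (c i) * X i := by
  have : h ∈ homogeneousSubmodule (Fin 3) K 1 := hh
  rw [homogeneousSubmodule_one_eq_span_X, Submodule.mem_span_range_iff_exists_fun] at this
  obtain ⟨c, hc⟩ := this
  exact ⟨c, by rw [← hc]; simp [smul_eq_C_mul]⟩

lemma kc_mem_pow (b : Module.Basis (Fin 3) K (Fin 3 → K)) (p : P2 K) (hb : b 2 = p.rep)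
    (f : MvPolynomial (Fin 3) K) (m : ℕ) :
    f ∈ pointIdeal p ^ m ↔ Polynomial.X ^ m ∣ kcT (kcA b f) := by
  constructor
  · intro hf
    have h1 : pointIdeal p ≤ (Ideal.span {Polynomial.X}).comap
        ((kcT.comp (kcA b)).toRingHom) := by
      rw [pointIdeal, Ideal.span_le]
      rintro h ⟨hh, h0⟩
      obtain ⟨c, rfl⟩ := kc_linear hh
      rw [SetLike.mem_coe, Ideal.mem_comap, Ideal.mem_span_singleton]
      change Polynomial.X ∣ kcT (kcA b _)
      rw [← hb] at h0
      simp only [map_sum, map_mul, eval_C, eval_X] at h0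
      have h2 : ∀ c : K, kcT (C c) = Polynomial.C (C c : MvPolynomial (Fin 3) K) := by
        intro c; simp [kcT]
      have h1 : ∀ c : K, kcA b (C c) = (C c : MvPolynomial (Fin 3) K) := by
        intro c; simp [kcA, algebraMap_eq]
      have h3 : ∀ i, kcA b (X i) = ∑ j, C (b j i) * X j := by intro i; simp [kcA]
      have h4 : kcT (X 0 : MvPolynomial (Fin 3) K) = Polynomial.X * Polynomial.C (X 0) := by
        simp [kcT]
      have h5 : kcT (X 1 : MvPolynomial (Fin 3) K) = Polynomial.X * Polynomial.C (X 1) := by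
        simp [kcT]
      have h6 : kcT (X 2 : MvPolynomial (Fin 3) K) = Polynomial.C (X 2) := by
        simp [kcT]
      rw [Polynomial.X_dvd_iff]
      simp only [Fin.sum_univ_three, map_add, map_mul, h1, h2, h3, h4, h5, h6] at h0 ⊢
      simp only [Polynomial.coeff_add, Polynomial.mul_coeff_zero, Polynomial.coeff_C_zero,
        Polynomial.coeff_X_zero]
      have : (C (c 0 * b 2 0 + c 1 * b 2 1 + c 2 * b 2 2) : MvPolynomial (Fin 3) K) = 0 := by
        rw [h0, C_0]
      simp only [map_add, map_mul] at this
      linear_combination X 2 * this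
    have h2 : f ∈ ((Ideal.span {Polynomial.X}) ^ m).comap ((kcT.comp (kcA b)).toRingHom) :=
      Ideal.le_comap_pow _ m (Ideal.pow_right_mono h1 m hf)
    rw [Ideal.mem_comap, Ideal.span_singleton_pow, Ideal.mem_span_singleton] at h2
    exact h2
  · intro h
    rw [kcT_dvd] at h
    rw [← kcBA b f]
    generalize kcA b f = g at h
    rw [g.as_sum, map_sum]
    refine Ideal.sum_mem _ fun e he => ?_
    have he' : m ≤ e 0 + e 1 := by
      by_contra hlt
      exact (mem_support_iff.1 he) (h e (by omega))
    have hj : ∀ j : Fin 3, j ≠ 2 → kcForm b j ∈ pointIdeal p := by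
      intro j hj
      refine Ideal.subset_span ⟨kcForm_hom b j, ?_⟩
      rw [← hb, kcForm_eval]
      simp [hj.symm]
    rw [kcB, aeval_monomial, Finsupp.prod_fintype _ _ (by simp), Fin.prod_univ_three]
    refine Ideal.mul_mem_left _ _ (Ideal.mul_mem_right _ _ ?_)
    have := Ideal.mul_mem_mul (Ideal.pow_mem_pow (hj 0 (by decide)) (e 0))
      (Ideal.pow_mem_pow (hj 1 (by decide)) (e 1))
    rw [← pow_add] at this
    exact Ideal.pow_le_pow_right he' this

lemma kc_extend {n : ℕ} (hn : n < 3) (v : Fin n → (Fin 3 → K)) (hv : LinearIndependent K v) :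
    ∃ c, LinearIndependent K (Fin.cons c v : Fin (n+1) → (Fin 3 → K)) := by
  have : ∃ c, c ∉ Submodule.span K (Set.range v) := by
    by_contra hc
    push Not at hc
    have htop : Submodule.span K (Set.range v) = ⊤ := by
      rw [eq_top_iff]; intro x _; exact hc x
    have h1 := finrank_span_eq_card hv
    rw [htop] at h1
    simp at h1
    omega
  obtain ⟨c, hc⟩ := this
  exact ⟨c, linearIndependent_finCons.2 ⟨hv, hc⟩⟩

lemma kc_basis (v : Fin 3 → (Fin 3 → K)) (hv : LinearIndependent K v) :
    ∃ b : Module.Basis (Fin 3) K (Fin 3 → K), ⇑b = v :=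
  ⟨basisOfLinearIndependentOfCardEqFinrank hv (by simp), by simp⟩

lemma kc_pt_basis (p : P2 K) :
    ∃ b : Module.Basis (Fin 3) K (Fin 3 → K), b 2 = p.rep := by
  have h0 : LinearIndependent K (fun _ : Fin 1 => p.rep) :=
    LinearIndependent.of_subsingleton 0 p.rep_nonzero
  obtain ⟨c, hc⟩ := kc_extend (by norm_num) _ h0
  obtain ⟨c', hc'⟩ := kc_extend (by norm_num) _ hc
  obtain ⟨b, hb⟩ := kc_basis _ hc'
  exact ⟨b, by rw [hb]; rfl⟩

/-- Division by a linear form not through the point. -/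
lemma kc_div_off (p : P2 K) {l g : MvPolynomial (Fin 3) K} (hl : l ∉ pointIdeal p) {m : ℕ}
    (h : l * g ∈ pointIdeal p ^ m) : g ∈ pointIdeal p ^ m := by
  obtain ⟨b, hb⟩ := kc_pt_basis p
  rw [kc_mem_pow b p hb] at h ⊢
  rw [← pow_one (pointIdeal p), kc_mem_pow b p hb, pow_one] at hl
  rw [map_mul, map_mul] at h
  exact Polynomial.prime_X.pow_dvd_of_dvd_mul_left _ hl h

/-- Division by a linear form through the point. -/
lemma kc_div_on (p : P2 K) {l g : MvPolynomial (Fin 3) K} (hl : l.IsHomogeneous 1)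
    (hl0 : l ≠ 0) {m : ℕ}
    (h : l * g ∈ pointIdeal p ^ m) : g ∈ pointIdeal p ^ (m - 1) := by
  obtain ⟨b, hb⟩ := kc_pt_basis p
  rcases m with _ | m
  · simp
  rw [Nat.add_sub_cancel]
  rw [kc_mem_pow b p hb] at h ⊢
  rw [map_mul, map_mul] at h
  by_cases hd : Polynomial.X ∣ kcT (kcA b l)
  · obtain ⟨q, hq⟩ := hd
    have hq1 : ¬ Polynomial.X ∣ q := by
      intro hq2
      have h2 : Polynomial.X ^ 2 ∣ kcT (kcA b l) := by
        rw [hq, pow_two]; exact mul_dvd_mul_left _ hq2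
      rw [kcT_dvd] at h2
      apply hl0
      have : kcA b l = 0 := by
        ext e
        rw [coeff_zero]
        by_cases he : e.degree = 1
        · apply h2
          rw [Finsupp.degree_eq_sum, Fin.sum_univ_three] at he
          omega
        · exact (kcA_hom b hl).coeff_eq_zero he
      rw [← kcBA b l, this, map_zero]
    rw [hq, pow_succ', mul_assoc, mul_dvd_mul_iff_left Polynomial.X_ne_zero] at h
    exact Polynomial.prime_X.pow_dvd_of_dvd_mul_left _ hq1 h
  · exact (pow_dvd_pow _ (Nat.le_succ m)).trans
      (Polynomial.prime_X.pow_dvd_of_dvd_mul_left _ hd h)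

/-- Forms of degree `t` vanishing to order `μ p` at the points of `S`. -/
noncomputable def kcV (S : Set (P2 K)) (μ : P2 K → ℕ) (t : ℕ) :
    Submodule K (MvPolynomial (Fin 3) K) :=
  Submodule.restrictScalars K ((⨅ p ∈ S, pointIdeal p ^ μ p : Ideal (MvPolynomial (Fin 3) K)) :
    Submodule (MvPolynomial (Fin 3) K) (MvPolynomial (Fin 3) K)) ⊓ homogeneousSubmodule (Fin 3) K t

lemma mem_kcV {S : Set (P2 K)} {μ : P2 K → ℕ} {t : ℕ} {f : MvPolynomial (Fin 3) K} :
    f ∈ kcV S μ t ↔ (∀ p ∈ S, f ∈ pointIdeal p ^ μ p) ∧ f.IsHomogeneous t := by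
  simp [kcV]

instance kc_finite (t : ℕ) : Module.Finite K (homogeneousSubmodule (Fin 3) K t) :=
  Module.Finite.iff_fg.2 (homogeneousSubmodule_fg (Fin 3) K t)

lemma kcV_le (S : Set (P2 K)) (μ : P2 K → ℕ) (t : ℕ) :
    kcV S μ t ≤ homogeneousSubmodule (Fin 3) K t := inf_le_right

instance kcV_finite (S : Set (P2 K)) (μ : P2 K → ℕ) (t : ℕ) : Module.Finite K (kcV S μ t) :=
  Submodule.finiteDimensional_of_le (kcV_le S μ t)

lemma kc_dim (t : ℕ) :
    Module.finrank K (homogeneousSubmodule (Fin 3) K t) = (t + 2).choose 2 := by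
  rw [homogeneousSubmodule_eq_finsupp_supported]
  change Module.finrank K (restrictSupport K {d : Fin 3 →₀ ℕ | d.degree = t}) = _
  rw [Module.finrank_eq_nat_card_basis
    (basisRestrictSupport K {d : Fin 3 →₀ ℕ | d.degree = t})]
  have : {d : Fin 3 →₀ ℕ | d.degree = t} =
      ((Finset.univ : Finset (Fin 3)).finsuppAntidiag t : Set (Fin 3 →₀ ℕ)) := by
    ext d
    simp [Finsupp.degree_eq_sum]
  rw [this, Nat.card_coe_set_eq, Set.ncard_coe_finset, Finset.card_finsuppAntidiag_nat_eq_choose]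
  simp only [Finset.card_univ, Fintype.card_fin]
  rw [show 3 + t - 1 = t + 2 by omega, ← Nat.choose_symm_add]

lemma kc_rn {M N : Type*} [AddCommGroup M] [Module K M] [AddCommGroup N] [Module K N]
    (U : Submodule K M) [Module.Finite K U] (φ : M →ₗ[K] N) :
    Module.finrank K U = Module.finrank K (U.map φ) + Module.finrank K ↥(U ⊓ LinearMap.ker φ) := by
  have h := LinearMap.finrank_range_add_finrank_ker (φ.domRestrict U)
  rw [← h, LinearMap.range_domRestrict]
  congr 1
  have h2 : (LinearMap.ker (φ.domRestrict U)).map U.subtype = U ⊓ LinearMap.ker φ := by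
    ext x
    simp only [Submodule.mem_map, LinearMap.mem_ker, LinearMap.domRestrict_apply,
      Submodule.subtype_apply, Subtype.exists, Submodule.mem_inf]
    constructor
    · rintro ⟨a, ha, h, rfl⟩; exact ⟨ha, h⟩
    · rintro ⟨a, b⟩; exact ⟨x, a, b, rfl⟩
  rw [← h2]
  exact (Submodule.equivMapOfInjective _ U.injective_subtype _).finrank_eq

/-- Exponent vectors. -/
noncomputable def kcE (a b c : ℕ) : Fin 3 →₀ ℕ := Finsupp.equivFunOnFinite.symm ![a, b, c]

lemma kcE_eq (e : Fin 3 →₀ ℕ) : e = kcE (e 0) (e 1) (e 2) := by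
  ext i; fin_cases i <;> simp [kcE]

lemma kc_card (n : ℕ) : ∑ i : Fin n, (i.1 + 1) = (n + 1).choose 2 := by
  rw [Fin.sum_univ_eq_sum_range (fun i => i + 1)]
  induction n with
  | zero => rfl
  | succ n ih => rw [Finset.sum_range_succ, ih, Nat.choose_succ_succ' (n+1) 1]; simp; ring

lemma kc_C (S : Finset (P2 K)) (μ : P2 K → ℕ) (t : ℕ) :
    (t + 2).choose 2 ≤ Module.finrank K (kcV (S : Set (P2 K)) μ t)
      + ∑ p ∈ S, (μ p + 1).choose 2 := by
  choose b hb using fun p : P2 K => kc_pt_basis p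
  let ι := Σ p : S, Σ n : Fin (μ p), Fin (n.1 + 1)
  let Φ : MvPolynomial (Fin 3) K →ₗ[K] (ι → K) :=
    LinearMap.pi fun i => (lcoeff K (kcE i.2.2.1 (i.2.1.1 - i.2.2.1) (t - i.2.1.1))) ∘ₗ
      (kcA (b i.1)).toLinearMap
  rw [← kc_dim (K := K) t, kc_rn (homogeneousSubmodule (Fin 3) K t) Φ, add_comm]
  refine add_le_add ?_ ?_
  · refine Submodule.finrank_mono ?_
    rintro f ⟨hf, hk⟩
    rw [mem_kcV]
    refine ⟨fun p hp => ?_, hf⟩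
    rw [kc_mem_pow (b p) p (hb p), kcT_dvd]
    intro e he
    by_cases hd : e.degree = t
    · rw [Finsupp.degree_eq_sum, Fin.sum_univ_three] at hd
      have h1 := congrFun (LinearMap.mem_ker.1 hk)
        (⟨⟨p, hp⟩, ⟨e 0 + e 1, he⟩, ⟨e 0, by simp⟩⟩ : ι)
      have h2 : coeff (kcE (e 0) (e 0 + e 1 - e 0) (t - (e 0 + e 1))) (kcA (b p) f) = 0 := h1
      rw [show e 0 + e 1 - e 0 = e 1 by omega, show t - (e 0 + e 1) = e 2 by omega,
        ← kcE_eq] at h2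
      exact h2
    · exact (kcA_hom (b p) hf).coeff_eq_zero hd
  · refine (Submodule.finrank_le _).trans ?_
    rw [Module.finrank_fintype_fun_eq_card]
    simp only [ι, Fintype.card_sigma, Fintype.card_fin]
    simp only [kc_card]
    rw [Finset.sum_coe_sort S (fun p => (μ p + 1).choose 2)]

lemma kc_mem_points {L : ProjLine K} {p : P2 K} : p ∈ L.points ↔ p.rep ∈ L.toSubmodule := by
  rw [ProjLine.points, Set.mem_ofPred_eq, Projectivization.submodule_eq,
    Submodule.span_singleton_le_iff_mem]

lemma kc_line_basis [Infinite K] (L : ProjLine K) (S : Set (P2 K)) (hS : S.Finite) :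
    ∃ b : Module.Basis (Fin 3) K (Fin 3 → K),
      (∀ x, x ∈ L.toSubmodule ↔ b.coord 0 x = 0) ∧
      ∀ p ∈ S, p ∈ L.points → b.coord 1 p.rep ≠ 0 := by
  let e := Module.finBasisOfFinrankEq K L.toSubmodule L.finrank_eq_two
  have he : LinearIndependent K (fun i => (e i : Fin 3 → K)) :=
    e.linearIndependent.map' L.toSubmodule.subtype (by simp)
  have he' := LinearIndependent.pair_iff.1 (show LinearIndependent K
      ![(e 0 : Fin 3 → K), (e 1 : Fin 3 → K)] by
    convert he using 1; ext i; fin_cases i <;> rfl)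
  let w : K → (Fin 3 → K) := fun z => z • (e 0 : Fin 3 → K) + (e 1 : Fin 3 → K)
  have hw0 : ∀ z, w z ≠ 0 := by
    intro z hz
    have := (he' z 1 (by simpa [w] using hz)).2
    exact one_ne_zero this
  have hinj : Function.Injective fun z => Projectivization.mk K (w z) (hw0 z) := by
    intro z z' h
    obtain ⟨a, ha⟩ := (Projectivization.mk_eq_mk_iff' K _ _ _ _).1 h
    have h1 : (a * z' - z) • (e 0 : Fin 3 → K) + (a - 1) • (e 1 : Fin 3 → K) = 0 := by
      have : a • w z' - w z = 0 := by rw [ha, sub_self]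
      rw [← this]
      simp only [w]
      module
    obtain ⟨h2, h3⟩ := he' _ _ h1
    have h4 : a = 1 := sub_eq_zero.1 h3
    rw [h4, one_mul] at h2
    exact (sub_eq_zero.1 h2).symm
  obtain ⟨z, hz⟩ : ∃ z, Projectivization.mk K (w z) (hw0 z) ∉ S := by
    by_contra hc
    push Not at hc
    exact Set.infinite_of_injective_forall_mem hinj hc hS
  have hli : LinearIndependent K ![(e 0 : Fin 3 → K), w z] := by
    rw [LinearIndependent.pair_iff]
    intro s t hst
    have : (s + t * z) • (e 0 : Fin 3 → K) + t • (e 1 : Fin 3 → K) = 0 := by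
      rw [← hst]; simp only [w]; module
    obtain ⟨h2, h3⟩ := he' _ _ this
    rw [h3] at h2
    exact ⟨by simpa using h2, h3⟩
  obtain ⟨c, hc⟩ := kc_extend (by norm_num) _ hli
  obtain ⟨b, hb⟩ := kc_basis _ hc
  have hb1 : b 1 = (e 0 : Fin 3 → K) := by rw [hb]; rfl
  have hb2 : b 2 = w z := by rw [hb]; rfl
  have hm1 : b 1 ∈ L.toSubmodule := by rw [hb1]; exact (e 0).2
  have hm2 : b 2 ∈ L.toSubmodule := by
    rw [hb2]; exact L.toSubmodule.add_mem (L.toSubmodule.smul_mem _ (e 0).2) (e 1).2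
  have hspan : ∀ x, x ∈ L.toSubmodule ↔ b.coord 0 x = 0 := by
    intro x
    constructor
    · intro hx
      have h1 := e.sum_repr ⟨x, hx⟩
      rw [Fin.sum_univ_two] at h1
      have h2 := congrArg Subtype.val h1
      simp only [Submodule.coe_add, Submodule.coe_smul] at h2
      have he1 : (e 1 : Fin 3 → K) = b 2 - z • b 1 := by
        rw [hb1, hb2]; simp only [w]; module
      rw [← h2, he1, ← hb1]
      simp
    · intro hx
      rw [← b.sum_repr x, Fin.sum_univ_three]
      rw [Module.Basis.coord_apply] at hx
      rw [hx, zero_smul, zero_add]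
      exact L.toSubmodule.add_mem (L.toSubmodule.smul_mem _ hm1) (L.toSubmodule.smul_mem _ hm2)
  refine ⟨b, hspan, fun p hp hpL h0 => hz ?_⟩
  have h1 := (hspan _).1 (kc_mem_points.1 hpL)
  rw [Module.Basis.coord_apply] at h0 h1
  have h2 := b.sum_repr p.rep
  rw [Fin.sum_univ_three, h0, h1, zero_smul, zero_smul, zero_add, zero_add, hb2] at h2
  have : Projectivization.mk K (w z) (hw0 z) = p := by
    rw [← p.mk_rep]
    refine ((Projectivization.mk_eq_mk_iff' K _ _ _ _).2 ⟨_, h2⟩).symm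
  rw [this]; exact hp

/-- Restriction to the line spanned by the last two coordinate points, dehomogenized. -/
noncomputable def kcRho : MvPolynomial (Fin 3) K →ₐ[K] Polynomial K :=
  aeval ![0, 1, Polynomial.X]

lemma kcRho_monomial (e : Fin 3 →₀ ℕ) (c : K) :
    kcRho (monomial e c) = if e 0 = 0 then Polynomial.monomial (e 2) c else 0 := by
  rw [kcRho, aeval_monomial, Finsupp.prod_fintype _ _ (by simp), Fin.prod_univ_three]
  simp only [Matrix.cons_val_zero, Matrix.cons_val_one, Matrix.cons_val, one_pow, mul_one]
  split_ifs with h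
  · rw [h, pow_zero, one_mul, ← Polynomial.C_mul_X_pow_eq_monomial]; rfl
  · rw [zero_pow h]; simp

lemma kcRho_coeff {g : MvPolynomial (Fin 3) K} {t : ℕ} (hg : g.IsHomogeneous t) (n : ℕ) :
    (kcRho g).coeff n = if n ≤ t then coeff (kcE 0 (t - n) n) g else 0 := by
  conv_lhs => rw [g.as_sum, map_sum, Polynomial.finsetSum_coeff]
  simp only [kcRho_monomial]
  have h0 : ∀ e ∈ g.support, e 0 + e 1 + e 2 = t := by
    intro e he
    by_contra hne
    refine mem_support_iff.1 he (hg.coeff_eq_zero ?_)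
    rwa [Finsupp.degree_eq_sum, Fin.sum_univ_three]
  split_ifs with hn
  · rw [Finset.sum_eq_single (kcE 0 (t - n) n)]
    · simp [kcE]
    · intro e he hne
      split_ifs with h1
      · rw [Polynomial.coeff_monomial, if_neg]
        intro h2
        apply hne
        have := h0 e he
        rw [kcE_eq e, h1, h2, show e 1 = t - n by omega]
      · simp
    · intro h
      rw [notMem_support_iff.1 h]; simp
  · refine Finset.sum_eq_zero fun e he => ?_
    have := h0 e he
    split_ifs with h1
    · rw [Polynomial.coeff_monomial, if_neg (by omega)]
    · simp

/-- Residual multiplicities with respect to a line. -/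
noncomputable def kcR (L : ProjLine K) (μ : P2 K → ℕ) : P2 K → ℕ := by
  classical exact fun p => if p ∈ L.points then μ p - 1 else μ p

lemma kcR_on {L : ProjLine K} {μ : P2 K → ℕ} {p : P2 K} (h : p ∈ L.points) :
    kcR L μ p = μ p - 1 := by simp [kcR, h]

lemma kcR_off {L : ProjLine K} {μ : P2 K → ℕ} {p : P2 K} (h : p ∉ L.points) :
    kcR L μ p = μ p := by simp [kcR, h]

lemma kc_form_ne (b : Module.Basis (Fin 3) K (Fin 3 → K)) (j : Fin 3) : kcForm b j ≠ 0 := by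
  intro h
  have := kcA_form b j
  rw [h, map_zero] at this
  exact X_ne_zero j this.symm

lemma kc_eval_pt {p : P2 K} {f : MvPolynomial (Fin 3) K} (hf : f ∈ pointIdeal p) :
    eval p.rep f = 0 := by
  have : pointIdeal p ≤ RingHom.ker (eval p.rep) := by
    rw [pointIdeal, Ideal.span_le]
    rintro h ⟨_, h0⟩
    exact h0
  exact this hf

lemma kc_B [Infinite K] (L : ProjLine K) (S : Finset (P2 K)) (μ : P2 K → ℕ) (t : ℕ) :
    Module.finrank K (kcV (S : Set (P2 K)) (kcR L μ) t) ≤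
      Module.finrank K (kcV (S : Set (P2 K)) μ (t + 1)) := by
  obtain ⟨b, hb, -⟩ := kc_line_basis L S S.finite_toSet
  have hinj : Function.Injective (LinearMap.mulLeft K (kcForm b 0)) :=
    mul_right_injective₀ (kc_form_ne b 0)
  rw [(Submodule.equivMapOfInjective _ hinj (kcV (S : Set (P2 K)) (kcR L μ) t)).finrank_eq]
  refine Submodule.finrank_mono ?_
  rintro _ ⟨g, hg, rfl⟩
  rw [SetLike.mem_coe, mem_kcV] at hg
  rw [mem_kcV, LinearMap.mulLeft_apply]
  refine ⟨fun p hp => ?_, ?_⟩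
  · have h1 := hg.1 p hp
    by_cases hL : p ∈ L.points
    · rw [kcR_on hL] at h1
      have h2 : kcForm b 0 ∈ pointIdeal p := by
        refine Ideal.subset_span ⟨kcForm_hom b 0, ?_⟩
        rw [kcForm_eval]
        exact (hb _).1 (kc_mem_points.1 hL)
      have h3 := Ideal.mul_mem_mul h2 h1
      rw [← pow_succ'] at h3
      exact Ideal.pow_le_pow_right (by omega) h3
    · rw [kcR_off hL] at h1
      exact Ideal.mul_mem_left _ _ h1
  · rw [add_comm]; exact (kcForm_hom b 0).mul hg.2

lemma kc_rho_pt (b : Module.Basis (Fin 3) K (Fin 3 → K)) (p : P2 K) (h0 : b.coord 0 p.rep = 0)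
    (h1 : b.coord 1 p.rep ≠ 0) {f : MvPolynomial (Fin 3) K} {m : ℕ} (hf : f ∈ pointIdeal p ^ m) :
    (Polynomial.X - Polynomial.C (b.coord 2 p.rep / b.coord 1 p.rep)) ^ m ∣ kcRho (kcA b f) := by
  set z := b.coord 2 p.rep / b.coord 1 p.rep with hz
  have h1' : pointIdeal p ≤ (Ideal.span {Polynomial.X - Polynomial.C z}).comap
        ((kcRho.comp (kcA b)).toRingHom) := by
    rw [pointIdeal, Ideal.span_le]
    rintro h ⟨hh, hp⟩
    obtain ⟨c, rfl⟩ := kc_linear hh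
    rw [SetLike.mem_coe, Ideal.mem_comap, Ideal.mem_span_singleton]
    change _ ∣ kcRho (kcA b _)
    have h2 : ∀ c : K, kcRho (C c) = Polynomial.C c := by
      intro c; simp [kcRho]
    have h3 : ∀ c : K, kcA b (C c) = (C c : MvPolynomial (Fin 3) K) := by
      intro c; simp [kcA, algebraMap_eq]
    have h4 : ∀ i, kcRho (kcA b (X i)) =
        Polynomial.C (b 1 i) + Polynomial.C (b 2 i) * Polynomial.X := by
      intro i
      simp only [kcA, aeval_X, Fin.sum_univ_three, map_add, map_mul, h2]
      simp [kcRho]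
    have h5 : p.rep = b.coord 1 p.rep • (b 1 + z • b 2) := by
      conv_lhs => rw [← b.sum_repr p.rep, Fin.sum_univ_three]
      rw [Module.Basis.coord_apply] at h0
      rw [h0, zero_smul, zero_add, smul_add, smul_smul, hz, mul_div_cancel₀ _ h1]
      simp
    have h6 : ∑ i, c i * (b 1 i + z * b 2 i) = 0 := by
      rw [h5] at hp
      simp only [map_sum, map_mul, eval_C, eval_X, Pi.smul_apply, Pi.add_apply, smul_eq_mul] at hp
      have : b.coord 1 p.rep * ∑ i, c i * (b 1 i + z * b 2 i) = 0 := by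
        rw [← hp, Finset.mul_sum]
        exact Finset.sum_congr rfl fun i _ => by ring
      exact (mul_eq_zero.1 this).resolve_left h1
    refine ⟨Polynomial.C (∑ i, c i * b 2 i), ?_⟩
    have h7 : Polynomial.C (∑ i, c i * (b 1 i + z * b 2 i)) = 0 := by rw [h6, Polynomial.C_0]
    simp only [map_mul, map_add, h2, h3, h4, Fin.sum_univ_three] at h7 ⊢
    linear_combination h7
  have h2 : f ∈ ((Ideal.span {Polynomial.X - Polynomial.C z}) ^ m).comap
      ((kcRho.comp (kcA b)).toRingHom) :=
    Ideal.le_comap_pow _ m (Ideal.pow_right_mono h1' m hf)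
  rw [Ideal.mem_comap, Ideal.span_singleton_pow, Ideal.mem_span_singleton] at h2
  exact h2

lemma kc_ker (b : Module.Basis (Fin 3) K (Fin 3 → K)) {f : MvPolynomial (Fin 3) K} {t : ℕ}
    (hf : f.IsHomogeneous (t + 1)) (h0 : kcRho (kcA b f) = 0) :
    ∃ g : MvPolynomial (Fin 3) K, g.IsHomogeneous t ∧ f = kcForm b 0 * g := by
  have hA := kcA_hom b hf
  have hc : ∀ e : Fin 3 →₀ ℕ, e 0 = 0 → coeff e (kcA b f) = 0 := by
    intro e he
    by_cases hd : e.degree = t + 1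
    · rw [Finsupp.degree_eq_sum, Fin.sum_univ_three] at hd
      have := kcRho_coeff hA (e 2)
      rw [h0, if_pos (by omega), show t + 1 - e 2 = e 1 by omega] at this
      rw [kcE_eq e, he, ← this, Polynomial.coeff_zero]
    · exact hA.coeff_eq_zero hd
  set g := (kcA b f) with hg
  have hdiv := divMonomial_add_modMonomial_single g 0
  have hmod : g.modMonomial (Finsupp.single 0 1) = 0 := by
    ext e
    by_cases hle : Finsupp.single 0 1 ≤ e
    · rw [coeff_modMonomial_of_le _ hle, coeff_zero]
    · rw [coeff_modMonomial_of_not_le _ hle, coeff_zero]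
      apply hc
      rw [Finsupp.single_le_iff] at hle
      omega
  rw [hmod, add_zero] at hdiv
  have hq : (g.divMonomial (Finsupp.single 0 1)).IsHomogeneous t := by
    intro e he
    rw [coeff_divMonomial] at he
    have h1 : (Finsupp.single 0 1 + e).degree = t + 1 := by
      by_contra h
      exact he (hA.coeff_eq_zero h)
    rw [map_add, Finsupp.degree_single] at h1
    change Finsupp.weight (fun _ => 1) e = t
    rw [← Finsupp.degree_eq_weight_one]
    omega
  refine ⟨kcB b (g.divMonomial (Finsupp.single 0 1)), ?_, ?_⟩
  · have := hq.aeval (kcForm b) (n := 1) (kcForm_hom b)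
    simpa [kcB] using this
  · have hX : kcB b (X 0) = kcForm b 0 := by simp [kcB]
    calc f = kcB b g := (kcBA b f).symm
      _ = kcB b (X 0 * g.divMonomial (Finsupp.single 0 1)) := by rw [hdiv]
      _ = _ := by rw [map_mul, hX]

lemma kc_A [Infinite K] (L : ProjLine K) (S : Finset (P2 K)) (μ : P2 K → ℕ) (t : ℕ)
    (SL : Finset (P2 K)) (hSL : ∀ p, p ∈ SL ↔ p ∈ S ∧ p ∈ L.points) :
    Module.finrank K (kcV (S : Set (P2 K)) μ (t + 1)) ≤
      Module.finrank K (kcV (S : Set (P2 K)) (kcR L μ) t) + (t + 2 - ∑ p ∈ SL, μ p) := by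
  obtain ⟨b, hb, hb1⟩ := kc_line_basis L S S.finite_toSet
  have hpt0 : ∀ p ∈ L.points, b.coord 0 p.rep = 0 := fun p hp => (hb _).1 (kc_mem_points.1 hp)
  let z : P2 K → K := fun p => b.coord 2 p.rep / b.coord 1 p.rep
  have hz : ∀ p ∈ SL, ∀ q ∈ SL, z p = z q → p = q := by
    intro p hp q hq h
    rw [hSL] at hp hq
    have hp1 := hb1 p hp.1 hp.2
    have hq1 := hb1 q hq.1 hq.2
    have hp0 := hpt0 p hp.2
    have hq0 := hpt0 q hq.2
    have key : ∀ r : P2 K, b.coord 0 r.rep = 0 → b.coord 1 r.rep ≠ 0 →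
        r.rep = b.coord 1 r.rep • (b 1 + z r • b 2) := by
      intro r h0 h1
      conv_lhs => rw [← b.sum_repr r.rep, Fin.sum_univ_three]
      rw [Module.Basis.coord_apply] at h0
      rw [h0, zero_smul, zero_add, smul_add, smul_smul, mul_div_cancel₀ _ h1]
      simp
    rw [← p.mk_rep, ← q.mk_rep, Projectivization.mk_eq_mk_iff']
    refine ⟨b.coord 1 p.rep / b.coord 1 q.rep, ?_⟩
    have kp := key p hp0 hp1
    have kq := key q hq0 hq1
    rw [h] at kp
    calc (b.coord 1 p.rep / b.coord 1 q.rep) • q.rep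
        = (b.coord 1 p.rep / b.coord 1 q.rep) • (b.coord 1 q.rep • (b 1 + z q • b 2)) :=
          congrArg _ kq
      _ = b.coord 1 p.rep • (b 1 + z q • b 2) := by rw [smul_smul, div_mul_cancel₀ _ hq1]
      _ = p.rep := kp.symm
  let φ : MvPolynomial (Fin 3) K →ₗ[K] Polynomial K := (kcRho.comp (kcA b)).toLinearMap
  let Q : Polynomial K := ∏ p ∈ SL, (Polynomial.X - Polynomial.C (z p)) ^ μ p
  have hQm : Q.Monic := Polynomial.monic_prod_of_monic _ _ fun p _ =>
    (Polynomial.monic_X_sub_C _).pow _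
  have hQd : Q.natDegree = ∑ p ∈ SL, μ p := by
    rw [Polynomial.natDegree_prod_of_monic _ _ fun p _ => (Polynomial.monic_X_sub_C _).pow _]
    simp
  rw [kc_rn (kcV (S : Set (P2 K)) μ (t + 1)) φ, add_comm]
  refine add_le_add ?_ ?_
  · have hinj : Function.Injective (LinearMap.mulLeft K (kcForm b 0)) :=
      mul_right_injective₀ (kc_form_ne b 0)
    rw [(Submodule.equivMapOfInjective _ hinj (kcV (S : Set (P2 K)) (kcR L μ) t)).finrank_eq]
    refine Submodule.finrank_mono ?_
    rintro f ⟨hf, hk⟩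
    rw [SetLike.mem_coe, mem_kcV] at hf
    obtain ⟨g, hg, rfl⟩ := kc_ker b hf.2 hk
    refine ⟨g, ?_, rfl⟩
    rw [SetLike.mem_coe, mem_kcV]
    refine ⟨fun p hp => ?_, hg⟩
    have h1 := hf.1 p hp
    by_cases hL : p ∈ L.points
    · rw [kcR_on hL]
      exact kc_div_on p (kcForm_hom b 0) (kc_form_ne b 0) h1
    · rw [kcR_off hL]
      refine kc_div_off p (fun hmem => hL ?_) h1
      have := kc_eval_pt hmem
      rw [kcForm_eval] at this
      exact kc_mem_points.2 ((hb _).2 this)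
  · have hle : (kcV (S : Set (P2 K)) μ (t + 1)).map φ ≤
        (Polynomial.degreeLT K (t + 2 - ∑ p ∈ SL, μ p)).map (LinearMap.mulLeft K Q) := by
      rintro _ ⟨f, hf, rfl⟩
      rw [SetLike.mem_coe, mem_kcV] at hf
      have hdvd : Q ∣ φ f := by
        refine Finset.prod_dvd_of_coprime ?_ ?_
        · intro p hp q hq hne
          refine IsCoprime.pow (Polynomial.isCoprime_X_sub_C_of_isUnit_sub ?_)
          exact (sub_ne_zero.2 fun h => hne (hz p hp q hq h)).isUnit
        · intro p hp
          rw [hSL] at hp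
          exact kc_rho_pt b p (hpt0 p hp.2) (hb1 p hp.1 hp.2) (hf.1 p hp.1)
      have hdeg : (φ f).natDegree ≤ t + 1 := by
        rw [Polynomial.natDegree_le_iff_coeff_eq_zero]
        intro n hn
        change (kcRho (kcA b f)).coeff n = 0
        rw [kcRho_coeff (kcA_hom b hf.2), if_neg (by omega)]
      obtain ⟨P, hP⟩ := hdvd
      refine ⟨P, ?_, hP.symm⟩
      rw [SetLike.mem_coe, Polynomial.mem_degreeLT]
      by_cases hP0 : P = 0
      · rw [hP0, Polynomial.degree_zero]; exact WithBot.bot_lt_coe _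
      · rw [← Polynomial.natDegree_lt_iff_degree_lt hP0]
        rw [hP, hQm.natDegree_mul' hP0, hQd] at hdeg
        omega
    have : Module.Finite K (Polynomial.degreeLT K (t + 2 - ∑ p ∈ SL, μ p)) :=
      Module.Finite.equiv (Polynomial.degreeLTEquiv K _).symm
    refine (Submodule.finrank_mono hle).trans ((Submodule.finrank_map_le _ _).trans ?_)
    rw [(Polynomial.degreeLTEquiv K _).finrank_eq]
    simp

/-- The defect `deg - H`. -/
noncomputable def kcD (S : Finset (P2 K)) (μ : P2 K → ℕ) (t : ℕ) : ℤ :=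
  (Module.finrank K (kcV (S : Set (P2 K)) μ t) : ℤ) + ((∑ p ∈ S, (μ p + 1).choose 2 : ℕ) : ℤ)
    - ((t + 2).choose 2 : ℕ)

lemma kcD_nonneg (S : Finset (P2 K)) (μ : P2 K → ℕ) (t : ℕ) : 0 ≤ kcD S μ t := by
  have := kc_C S μ t
  rw [kcD]; omega

open scoped Classical in
/-- Points of `S` on `L`. -/
noncomputable def kcOn (S : Finset (P2 K)) (L : ProjLine K) : Finset (P2 K) :=
  S.filter (fun p => p ∈ L.points)

lemma mem_kcOn {S : Finset (P2 K)} {L : ProjLine K} {p : P2 K} :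
    p ∈ kcOn S L ↔ p ∈ S ∧ p ∈ L.points := by simp [kcOn]

lemma kc_sum_choose (S : Finset (P2 K)) (L : ProjLine K) (μ : P2 K → ℕ) :
    ∑ p ∈ S, (μ p + 1).choose 2 = ∑ p ∈ S, (kcR L μ p + 1).choose 2 + ∑ p ∈ kcOn S L, μ p := by
  classical
  rw [kcOn, Finset.sum_filter, ← Finset.sum_add_distrib]
  refine Finset.sum_congr rfl fun p _ => ?_
  split_ifs with h
  · rw [kcR_on h]
    rcases hμ : μ p with _ | n
    · simp
    · rw [Nat.add_sub_cancel, Nat.choose_succ_succ' (n + 1) 1]; simp; ring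
  · rw [kcR_off h]; rfl

lemma kcD_A [Infinite K] (L : ProjLine K) (S : Finset (P2 K)) (μ : P2 K → ℕ) (t : ℕ) :
    kcD S μ (t + 1) ≤ kcD S (kcR L μ) t + max 0 ((∑ p ∈ kcOn S L, μ p : ℕ) - ((t : ℤ) + 2)) := by
  have h1 := kc_A L S μ t (kcOn S L) (fun p => mem_kcOn)
  have h2 := kc_sum_choose S L μ
  have h3 : (t + 1 + 2).choose 2 = (t + 2).choose 2 + (t + 2) := by
    rw [Nat.choose_succ_succ' (t + 2) 1]; simp; ring
  rw [kcD, kcD, h2, h3]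
  push_cast [-Nat.cast_sum]
  omega

lemma kcD_B [Infinite K] (L : ProjLine K) (S : Finset (P2 K)) (μ : P2 K → ℕ) (t : ℕ) :
    kcD S (kcR L μ) t + ((∑ p ∈ kcOn S L, μ p : ℕ) - ((t : ℤ) + 2)) ≤ kcD S μ (t + 1) := by
  have h1 := kc_B L S μ t
  have h2 := kc_sum_choose S L μ
  have h3 : (t + 1 + 2).choose 2 = (t + 2).choose 2 + (t + 2) := by
    rw [Nat.choose_succ_succ' (t + 2) 1]; simp; ring
  rw [kcD, kcD, h2, h3]
  push_cast [-Nat.cast_sum]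
  omega

lemma kcD_zero (S : Finset (P2 K)) (μ : P2 K → ℕ) (h : ∀ p ∈ S, μ p = 0) (t : ℕ) :
    kcD S μ t = 0 := by
  have h1 : kcV (S : Set (P2 K)) μ t = homogeneousSubmodule (Fin 3) K t := by
    ext f
    rw [mem_kcV, mem_homogeneousSubmodule]
    refine ⟨fun h => h.2, fun hf => ⟨fun p hp => ?_, hf⟩⟩
    rw [h p hp]; simp
  rw [kcD, h1, kc_dim, Finset.sum_eq_zero]
  · simp
  · intro p hp; rw [h p hp]; rfl

/-- Abstract (reversed) k-configuration data. -/
structure kcData (S : Finset (P2 K)) (s d : ℕ) (A : ℕ → ProjLine K) (Y : ℕ → Finset (P2 K)) :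
    Prop where
  lt : s < d
  cover : ∀ p ∈ S, ∃ i < s, p ∈ Y i
  sub : ∀ i < s, ∀ p ∈ Y i, p ∈ (A i).points
  card : ∀ i < s, (Y i).card + i ≤ d
  meet : ∀ i < s, ∀ j < s, i ≠ j → ∀ p q, p ∈ (A i).points → p ∈ (A j).points →
    q ∈ (A i).points → q ∈ (A j).points → p = q
  no : ∀ i < s, ∀ j < s, i < j → ∀ p ∈ Y j, p ∉ (A i).points

lemma kc_step {S : Finset (P2 K)} {s d : ℕ} {A : ℕ → ProjLine K} {Y : ℕ → Finset (P2 K)}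
    (h : kcData S s d A Y) {i : ℕ} (hi : i < s) {m : ℕ} (hm : 1 ≤ m) (ν : P2 K → ℕ)
    (h1 : ∀ p ∈ S, ν p ≤ m) (h2 : ∀ p ∈ S, ∀ b < i, p ∈ (A b).points → ν p ≤ m - 1) :
    ∑ p ∈ kcOn S (A i), ν p + i ≤ m * d ∧
    (2 ≤ m → (kcOn S (A i)).card ≠ d → ∑ p ∈ kcOn S (A i), ν p + i + 1 ≤ m * d) := by
  classical
  set T := kcOn S (A i) with hT
  have hb : ∀ p ∈ T \ Y i, ∃ b < i, p ∈ Y b := by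
    intro p hp
    rw [Finset.mem_sdiff, hT, mem_kcOn] at hp
    obtain ⟨j, hj, hpj⟩ := h.cover p hp.1.1
    rcases lt_trichotomy j i with hlt | rfl | hgt
    · exact ⟨j, hlt, hpj⟩
    · exact absurd hpj hp.2
    · exact absurd hp.1.2 (h.no i hi j hj hgt p hpj)
  have hn : (T \ Y i).card ≤ i := by
    choose! f hf using hb
    have := Finset.card_le_card_of_injOn (s := T \ Y i) (t := Finset.range i) f
      (fun p hp => by simpa using (hf p hp).1)
      (by
        intro p hp q hq hpq
        have hp' := hf p hp
        have hq' := hf q hq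
        rw [← hpq] at hq'
        have hp1 : p ∈ (A i).points := (mem_kcOn.1 (Finset.mem_sdiff.1 hp).1).2
        have hq1 : q ∈ (A i).points := (mem_kcOn.1 (Finset.mem_sdiff.1 hq).1).2
        have hlt : f p < s := by omega
        exact h.meet i hi (f p) hlt (by omega) p q hp1 (h.sub _ hlt p hp'.2) hq1
          (h.sub _ hlt q hq'.2))
    simpa using this
  have ha : (T ∩ Y i).card + i ≤ d :=
    (Nat.add_le_add_right (Finset.card_le_card Finset.inter_subset_right) i).trans (h.card i hi)
  have hsum : ∑ p ∈ T, ν p = ∑ p ∈ T ∩ Y i, ν p + ∑ p ∈ T \ Y i, ν p :=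
    (Finset.sum_inter_add_sum_sdiff T (Y i) ν).symm
  have hcard : T.card = (T ∩ Y i).card + (T \ Y i).card :=
    (Finset.card_inter_add_card_sdiff T (Y i)).symm
  have hs1 : ∑ p ∈ T ∩ Y i, ν p ≤ (T ∩ Y i).card * m := by
    refine Finset.sum_le_card_nsmul _ _ _ fun p hp => ?_
    exact h1 p (mem_kcOn.1 (Finset.mem_inter.1 hp).1).1
  have hs2 : ∑ p ∈ T \ Y i, ν p ≤ (T \ Y i).card * (m - 1) := by
    refine Finset.sum_le_card_nsmul _ _ _ fun p hp => ?_
    obtain ⟨b, hbi, hpb⟩ := hb p hp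
    exact h2 p (mem_kcOn.1 (Finset.mem_sdiff.1 hp).1).1 b hbi (h.sub b (by omega) p hpb)
  obtain ⟨k, rfl⟩ : ∃ k, m = k + 1 := ⟨m - 1, by omega⟩
  rw [Nat.add_sub_cancel] at hs2
  generalize (T ∩ Y i).card = a at *
  generalize (T \ Y i).card = n at *
  rw [hsum, hcard]
  constructor
  · have e1 : a * (k + 1) ≤ (d - i) * (k + 1) := Nat.mul_le_mul_right _ (by omega)
    have e2 : n * k ≤ i * k := Nat.mul_le_mul_right _ hn
    have e3 : (d - i) * (k + 1) + i * (k + 1) = d * (k + 1) := by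
      rw [← add_mul]; congr 1; omega
    have : i * (k + 1) = i * k + i := by ring
    have : (k + 1) * d = d * (k + 1) := mul_comm _ _
    omega
  · intro hk hne
    by_cases hai : a + i = d
    · have hni : n + 1 ≤ i := by omega
      have e2 : (n + 1) * k ≤ i * k := Nat.mul_le_mul_right _ hni
      have e3 : a * (k + 1) + i * (k + 1) = d * (k + 1) := by rw [← add_mul, hai]
      have : i * (k + 1) = i * k + i := by ring
      have : (n + 1) * k = n * k + k := by ring
      have : (k + 1) * d = d * (k + 1) := mul_comm _ _
      omega
    · have e1 : (a + 1 + i) * (k + 1) ≤ d * (k + 1) := Nat.mul_le_mul_right _ (by omega)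
      have e2 : n * k ≤ i * k := Nat.mul_le_mul_right _ hn
      have : (a + 1 + i) * (k + 1) = a * (k + 1) + k + 1 + i * k + i := by ring
      have : (k + 1) * d = d * (k + 1) := mul_comm _ _
      omega

/-- Iterated residual multiplicities. -/
noncomputable def kcM (A : ℕ → ProjLine K) (μ : P2 K → ℕ) : ℕ → P2 K → ℕ
  | 0 => μ
  | i + 1 => kcR (A i) (kcM A μ i)

lemma kcR_le (L : ProjLine K) (μ : P2 K → ℕ) (p : P2 K) : kcR L μ p ≤ μ p := by
  by_cases h : p ∈ L.points
  · rw [kcR_on h]; omega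
  · rw [kcR_off h]

lemma kcM_le (A : ℕ → ProjLine K) (μ : P2 K → ℕ) (i : ℕ) (p : P2 K) : kcM A μ i p ≤ μ p := by
  induction i with
  | zero => exact le_rfl
  | succ i ih => exact (kcR_le _ _ _).trans ih

lemma kcM_le' (A : ℕ → ProjLine K) (μ : P2 K → ℕ) (i : ℕ) (p : P2 K) (b : ℕ) (hb : b < i)
    (hp : p ∈ (A b).points) : kcM A μ i p ≤ μ p - 1 := by
  induction i with
  | zero => omega
  | succ i ih =>
    rcases Nat.lt_succ_iff_lt_or_eq.1 hb with h | rfl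
    · exact (kcR_le _ _ _).trans (ih h)
    · change kcR (A b) (kcM A μ b) p ≤ _
      rw [kcR_on hp]
      have := kcM_le A μ b p
      omega

lemma kc_round1 [Infinite K] {S : Finset (P2 K)} {s d : ℕ} {A : ℕ → ProjLine K}
    {Y : ℕ → Finset (P2 K)} (h : kcData S s d A Y) {m : ℕ} (hm : 1 ≤ m) (μ : P2 K → ℕ)
    (hμ : ∀ p ∈ S, μ p ≤ m) (t : ℕ) (ht : m * d ≤ t + 1) :
    ∀ i ≤ s, kcD S μ t ≤ kcD S (kcM A μ i) (t - i) := by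
  intro i
  induction i with
  | zero => intro _; exact le_rfl
  | succ i ih =>
    intro hi
    refine (ih (by omega)).trans ?_
    have hd : d ≤ m * d := Nat.le_mul_of_pos_left d hm
    have hlt := h.lt
    obtain ⟨t', ht'⟩ : ∃ t', t - i = t' + 1 := ⟨t - i - 1, by omega⟩
    rw [ht', show t - (i + 1) = t' by omega]
    have hA := kcD_A (A i) S (kcM A μ i) t'
    have hst := (kc_step h (i := i) (by omega) hm (kcM A μ i)
      (fun p hp => (kcM_le A μ i p).trans (hμ p hp))
      (fun p hp b hb hpb => (kcM_le' A μ i p b hb hpb).trans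
        (Nat.sub_le_sub_right (hμ p hp) 1))).1
    change _ ≤ kcD S (kcR (A i) (kcM A μ i)) t'
    omega

lemma kc_vanish [Infinite K] {S : Finset (P2 K)} {s d : ℕ} {A : ℕ → ProjLine K}
    {Y : ℕ → Finset (P2 K)} (h : kcData S s d A Y) (m : ℕ) : ∀ (μ : P2 K → ℕ)
    (_ : ∀ p ∈ S, μ p ≤ m) (t : ℕ) (_ : m * d ≤ t + 1), kcD S μ t ≤ 0 := by
  induction m with
  | zero =>
    intro μ hμ t _
    exact (kcD_zero S μ (fun p hp => Nat.le_zero.1 (hμ p hp)) t).le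
  | succ m ih =>
    intro μ hμ t ht
    refine (kc_round1 h (by omega) μ hμ t ht s le_rfl).trans (ih _ ?_ _ ?_)
    · intro p hp
      obtain ⟨b, hb, hpb⟩ := h.cover p hp
      have := kcM_le' A μ s p b hb (h.sub b hb p hpb)
      have := hμ p hp
      omega
    · have := h.lt
      have : (m + 1) * d = m * d + d := by ring
      omega

lemma kc_round2 [Infinite K] {S : Finset (P2 K)} {s d : ℕ} {A : ℕ → ProjLine K}
    {Y : ℕ → Finset (P2 K)} (h : kcData S s d A Y) {m : ℕ} (hm : 2 ≤ m) (μ : P2 K → ℕ)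
    (hμ : ∀ p ∈ S, μ p ≤ m) (t : ℕ) (ht : m * d = t + 2) :
    ∀ i ≤ s, kcD S μ t ≤ kcD S (kcM A μ i) (t - i)
      + (((Finset.range i).filter (fun b => (kcOn S (A b)).card = d)).card : ℕ) := by
  intro i
  induction i with
  | zero => intro _; simp [kcM]
  | succ i ih =>
    intro hi
    refine (ih (by omega)).trans ?_
    have hd : 2 * d ≤ m * d := Nat.mul_le_mul_right d hm
    have hlt := h.lt
    obtain ⟨t', ht'⟩ : ∃ t', t - i = t' + 1 := ⟨t - i - 1, by omega⟩
    rw [ht', show t - (i + 1) = t' by omega]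
    have hA := kcD_A (A i) S (kcM A μ i) t'
    have hst := kc_step h (i := i) (by omega) (by omega : 1 ≤ m) (kcM A μ i)
      (fun p hp => (kcM_le A μ i p).trans (hμ p hp))
      (fun p hp b hb hpb => (kcM_le' A μ i p b hb hpb).trans
        (Nat.sub_le_sub_right (hμ p hp) 1))
    change _ ≤ kcD S (kcR (A i) (kcM A μ i)) t' + _
    rw [Finset.range_add_one, Finset.filter_insert]
    split_ifs with hc
    · rw [Finset.card_insert_of_notMem (by simp)]
      have := hst.1
      push_cast
      omega
    · have := hst.2 hm hc
      omega

lemma kc_upper [Infinite K] {S : Finset (P2 K)} {s d : ℕ} {A : ℕ → ProjLine K}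
    {Y : ℕ → Finset (P2 K)} (h : kcData S s d A Y) {m : ℕ} (hm : 2 ≤ m) (t : ℕ)
    (ht : m * d = t + 2) :
    kcD S (fun _ => m) t ≤
      (((Finset.range s).filter (fun b => (kcOn S (A b)).card = d)).card : ℕ) := by
  have h1 := kc_round2 h hm (fun _ => m) (fun _ _ => le_rfl) t ht s le_rfl
  have h2 := kc_vanish h (m - 1) (kcM A (fun _ => m) s) (by
      intro p hp
      obtain ⟨b, hb, hpb⟩ := h.cover p hp
      exact kcM_le' A (fun _ => m) s p b hb (h.sub b hb p hpb)) (t - s) (by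
      have := h.lt
      obtain ⟨k, rfl⟩ : ∃ k, m = k + 1 := ⟨m - 1, by omega⟩
      have : (k + 1) * d = k * d + d := by ring
      rw [Nat.add_sub_cancel]
      omega)
  omega

lemma kc_lower [Infinite K] (S : Finset (P2 K)) (d m t : ℕ) (ht : m * d = t + 2)
    (hmeet : ∀ L L' : ProjLine K, L ≠ L' → ∀ p q, p ∈ L.points → p ∈ L'.points →
      q ∈ L.points → q ∈ L'.points → p = q) (F : Finset (ProjLine K)) :
    (∀ L ∈ F, (kcOn S L).card = d) → F.card ≤ t → (F.card : ℤ) ≤ kcD S (fun _ => m) t := by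
  classical
  suffices H : (∀ L ∈ F, (kcOn S L).card = d) → F.card ≤ t → ∃ ν : P2 K → ℕ,
      (∀ p, m ≤ ν p + (F.filter (fun L => p ∈ L.points)).card) ∧
      kcD S ν (t - F.card) + F.card ≤ kcD S (fun _ => m) t by
    intro h1 h2
    obtain ⟨ν, -, h⟩ := H h1 h2
    have := kcD_nonneg S ν (t - F.card)
    omega
  induction F using Finset.induction_on with
  | empty => intro _ _; exact ⟨fun _ => m, by simp, by simp⟩
  | insert L F hL ih =>
    intro h1 h2
    rw [Finset.card_insert_of_notMem hL] at h2
    obtain ⟨ν, hν, hD⟩ := ih (fun L' hL' => h1 L' (Finset.mem_insert_of_mem hL')) (by omega)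
    refine ⟨kcR L ν, ?_, ?_⟩
    · intro p
      have := hν p
      rw [Finset.filter_insert]
      split_ifs with hp
      · rw [kcR_on hp, Finset.card_insert_of_notMem (by simp [hL])]
        omega
      · rwa [kcR_off hp]
    · have hsum : m * d ≤ ∑ p ∈ kcOn S L, ν p + F.card := by
        have e1 : ∑ p ∈ kcOn S L, m ≤
            ∑ p ∈ kcOn S L, (ν p + (F.filter (fun L => p ∈ L.points)).card) :=
          Finset.sum_le_sum fun p _ => hν p
        rw [Finset.sum_const, h1 L (Finset.mem_insert_self _ _), smul_eq_mul,
          Finset.sum_add_distrib] at e1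
        have e2 : ∑ p ∈ kcOn S L, (F.filter (fun L => p ∈ L.points)).card ≤ F.card := by
          have := Finset.sum_card_bipartiteAbove_eq_sum_card_bipartiteBelow
            (s := kcOn S L) (t := F) (fun (p : P2 K) (L : ProjLine K) => p ∈ L.points)
          simp only [Finset.bipartiteAbove, Finset.bipartiteBelow] at this
          rw [this]
          refine (Finset.sum_le_card_nsmul _ _ 1 fun L' hL' => ?_).trans (by simp)
          rw [Finset.card_le_one]
          intro p hp q hq
          rw [Finset.mem_filter, mem_kcOn] at hp hq
          exact hmeet L L' (fun h => hL (h ▸ hL')) p q hp.1.2 hp.2 hq.1.2 hq.2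
        rw [mul_comm]
        omega
      obtain ⟨t', ht'⟩ : ∃ t', t - F.card = t' + 1 := ⟨t - F.card - 1, by omega⟩
      have hB := kcD_B L S ν t'
      rw [ht'] at hD
      rw [Finset.card_insert_of_notMem hL, show t - (F.card + 1) = t' by omega]
      push_cast
      omega

lemma kc_line_eq {L L' : ProjLine K} {p q : P2 K} (hne : p ≠ q) (h1 : p ∈ L.points)
    (h2 : p ∈ L'.points) (h3 : q ∈ L.points) (h4 : q ∈ L'.points) : L = L' := by
  have hli := Projectivization.linearIndependent_pair_iff_ne.2 hne
  have hr : Module.finrank K (Submodule.span K (Set.range ![p.rep, q.rep])) = 2 := by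
    simpa using finrank_span_eq_card hli
  have key : ∀ M : ProjLine K, p ∈ M.points → q ∈ M.points →
      Submodule.span K (Set.range ![p.rep, q.rep]) = M.toSubmodule := by
    intro M hp hq
    refine Submodule.eq_of_le_of_finrank_eq ?_ (by rw [hr, M.finrank_eq_two])
    rw [Submodule.span_le]
    rintro _ ⟨i, rfl⟩
    fin_cases i
    · exact kc_mem_points.1 hp
    · exact kc_mem_points.1 hq
  have : L.toSubmodule = L'.toSubmodule := (key L h1 h3).symm.trans (key L' h2 h4)
  cases L; cases L'; simpa using this

lemma kc_hilb (S : Finset (P2 K)) (m t : ℕ) :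
    (hilb (fatIdeal (S : Set (P2 K)) m) t : ℤ) =
      ((∑ p ∈ S, (m + 1).choose 2 : ℕ) : ℤ) - kcD S (fun _ => m) t := by
  have h1 : hilb (fatIdeal (S : Set (P2 K)) m) t =
      Module.finrank K (homogeneousSubmodule (Fin 3) K t) -
        Module.finrank K (kcV (S : Set (P2 K)) (fun _ => m) t) := rfl
  have h2 := Submodule.finrank_mono (kcV_le (S : Set (P2 K)) (fun _ => m) t)
  rw [h1, kcD]
  rw [kc_dim] at *
  omega


end KC

open MvPolynomial in
lemma kc_main {K : Type} [Field K] [Infinite K] {s : ℕ} (hs : 0 < s)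
    (X : Set (P2 K)) (d : Fin s → ℕ) (Xs : Fin s → Set (P2 K)) (Ls : Fin s → ProjLine K)
    (hX : IsKConfig X d Xs Ls)
    (ds : ℕ) (hds : ds = d ⟨s - 1, Nat.sub_lt hs Nat.one_pos⟩)
    (hgt : s < ds) (r : ℕ)
    (hfin : {L : ProjLine K | (X ∩ L.points).ncard = ds}.Finite)
    (hr : {L : ProjLine K | (X ∩ L.points).ncard = ds}.ncard = r) :
    ∀ m : ℕ, 2 ≤ m → deltaHilb (fatIdeal X m) ((m : ℤ) * ds - 1) = r := by
  classical
  intro m hm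
  have hXsf : ∀ i, (Xs i).Finite := fun i => Set.finite_of_ncard_pos (by
    rw [hX.card_eq]; exact hX.one_le i)
  have hXf : X.Finite := by rw [hX.union_eq]; exact Set.finite_iUnion hXsf
  obtain ⟨S, rfl⟩ : ∃ S : Finset (P2 K), X = ↑S := ⟨hXf.toFinset, by simp⟩
  let ix : ℕ → Fin s := fun i => ⟨s - 1 - i, by omega⟩
  have hix : ∀ i < s, ∀ j < s, ix i = ix j → i = j := by
    intro i hi j hj h
    have := congrArg Fin.val h
    simp only [ix] at this
    omega
  let A : ℕ → ProjLine K := fun i => Ls (ix i)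
  let Y : ℕ → Finset (P2 K) := fun i => (hXsf (ix i)).toFinset
  have hmeet : ∀ L L' : ProjLine K, L ≠ L' → ∀ p q, p ∈ L.points → p ∈ L'.points →
      q ∈ L.points → q ∈ L'.points → p = q := by
    intro L L' hne p q h1 h2 h3 h4
    by_contra hpq
    exact hne (kc_line_eq hpq h1 h2 h3 h4)
  have hcardY : ∀ i < s, d (ix i) + i ≤ ds := by
    intro i
    induction i with
    | zero => intro _; rw [hds]; simp [ix]
    | succ i ih =>
      intro hi
      have h1 := ih (by omega)
      have h2 : d (ix (i + 1)) < d (ix i) := hX.strictMono (by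
        change s - 1 - (i + 1) < s - 1 - i; omega)
      omega
  have hdata : kcData S s ds A Y :=
    { lt := hgt
      cover := by
        intro p hp
        have : p ∈ ⋃ i, Xs i := by rw [← hX.union_eq]; exact hp
        obtain ⟨i, hi⟩ := Set.mem_iUnion.1 this
        refine ⟨s - 1 - i.1, by omega, ?_⟩
        have : ix (s - 1 - i.1) = i := by ext; simp only [ix]; omega
        simp only [Y, Set.Finite.mem_toFinset, this]
        exact hi
      sub := by
        intro i _ p hp
        exact hX.subset_line _ ((hXsf _).mem_toFinset.1 hp)
      card := by
        intro i hi
        have : (Y i).card = d (ix i) := by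
          rw [← hX.card_eq, Set.ncard_eq_toFinset_card _ (hXsf (ix i))]
        rw [this]; exact hcardY i hi
      meet := by
        intro i hi j hj hne
        exact hmeet _ _ fun h => hne (hix i hi j hj (hX.lines_distinct h))
      no := by
        intro i hi j hj hlt p hp
        exact hX.not_mem (ix i) (ix j) (by change s - 1 - j < s - 1 - i; omega) p
          ((hXsf _).mem_toFinset.1 hp) }
  have hon : ∀ L : ProjLine K, ((S : Set (P2 K)) ∩ L.points).ncard = (kcOn S L).card := by
    intro L
    rw [← Set.ncard_coe_finset]
    congr 1
    ext p
    simp [mem_kcOn]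
  obtain ⟨F, hF⟩ : ∃ F : Finset (ProjLine K), ∀ L, L ∈ F ↔ (kcOn S L).card = ds :=
    ⟨hfin.toFinset, fun L => by rw [hfin.mem_toFinset, ← hon]; rfl⟩
  have hFr : F.card = r := by
    rw [← hr, ← Set.ncard_coe_finset]
    congr 1
    ext L
    rw [Finset.mem_coe, hF, ← hon]; rfl
  have hFA : ∀ L ∈ F, ∃ i < s, A i = L := by
    intro L hL
    by_contra hc
    push Not at hc
    have : (kcOn S L).card ≤ (Finset.range s).card := by
      have hcov : ∀ p ∈ kcOn S L, ∃ i < s, p ∈ Y i := fun p hp =>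
        hdata.cover p (mem_kcOn.1 hp).1
      choose! f hf using hcov
      refine Finset.card_le_card_of_injOn f (fun p hp => by simpa using (hf p hp).1) ?_
      intro p hp q hq hpq
      have hp' := hf p hp
      have hq' := hf q hq
      rw [← hpq] at hq'
      exact hmeet L (A (f p)) (hc _ hp'.1).symm p q (mem_kcOn.1 hp).2
        (hdata.sub _ hp'.1 p hp'.2) (mem_kcOn.1 hq).2 (hdata.sub _ hp'.1 q hq'.2)
    rw [(hF L).1 hL, Finset.card_range] at this
    omega
  have hFs : F.card ≤ s := by
    have : F ⊆ (Finset.range s).image A := by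
      intro L hL
      obtain ⟨i, hi, h⟩ := hFA L hL
      exact Finset.mem_image.2 ⟨i, Finset.mem_range.2 hi, h⟩
    exact (Finset.card_le_card this).trans (Finset.card_image_le.trans (by simp))
  have hfilt : ((Finset.range s).filter (fun b => (kcOn S (A b)).card = ds)).card ≤ F.card := by
    refine Finset.card_le_card_of_injOn A (fun i hi => ?_) ?_
    · exact (hF _).2 (Finset.mem_filter.1 hi).2
    · intro i hi j hj h
      exact hix i (Finset.mem_range.1 (Finset.mem_filter.1 hi).1) j
        (Finset.mem_range.1 (Finset.mem_filter.1 hj).1) (hX.lines_distinct h)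
  have hmd : 2 * ds ≤ m * ds := Nat.mul_le_mul_right _ hm
  obtain ⟨t, ht⟩ : ∃ t, m * ds = t + 2 := ⟨m * ds - 2, by omega⟩
  have h1 := kc_vanish hdata m (fun _ => m) (fun _ _ => le_rfl) (t + 1) (by omega)
  have h1' := kcD_nonneg S (fun _ => m) (t + 1)
  have h2 := kc_upper hdata hm t ht
  have h3 := kc_lower S ds m t ht hmeet F (fun L hL => (hF L).1 hL) (by omega)
  have e1 : ((m : ℤ) * ds - 1) = ((t + 1 : ℕ) : ℤ) := by
    have : ((m * ds : ℕ) : ℤ) = ((t + 2 : ℕ) : ℤ) := by rw [ht]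
    push_cast at this ⊢
    omega
  have e2 : (((t + 1 : ℕ) : ℤ) - 1) = ((t : ℕ) : ℤ) := by push_cast; ring
  rw [deltaHilb, e1, e2, hilbZ, hilbZ, if_neg (by omega), if_neg (by omega), Int.toNat_natCast,
    Int.toNat_natCast, kc_hilb, kc_hilb]
  omega


/-- **Theorem (the case `d_s > s`).** Let `X` be a k-configuration of type
`(d₁,…,d_s)` with `d_s > s`, and suppose exactly `r` lines contain exactly
`d_s` points of `X`. Then `ΔH_{mX}(m·d_s − 1) = r` for all `m ≥ 2`. -/
theorem kconfig_big_mult {K : Type} [Field K] [IsAlgClosed K] {s : ℕ} (hs : 0 < s)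
    (X : Set (P2 K)) (d : Fin s → ℕ) (Xs : Fin s → Set (P2 K)) (Ls : Fin s → ProjLine K)
    (hX : IsKConfig X d Xs Ls)
    (ds : ℕ) (hds : ds = d ⟨s - 1, Nat.sub_lt hs Nat.one_pos⟩)
    (hgt : s < ds) (r : ℕ)
    (hfin : {L : ProjLine K | (X ∩ L.points).ncard = ds}.Finite)
    (hr : {L : ProjLine K | (X ∩ L.points).ncard = ds}.ncard = r) :
    ∀ m : ℕ, 2 ≤ m → deltaHilb (fatIdeal X m) ((m : ℤ) * ds - 1) = r := by
  exact kc_main hs X d Xs Ls hX ds hds hgt r hfin hr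
end

section
/- Let X ⊆ P² be a k-configuration of type (1,2,…,s) with s ≥ 2, and suppose there are exactly s + 1 lines in P² each containing exactly s points of X. Then the points of X are precisely the pairwise intersection points of these s + 1 lines. -/
theorem ProjLine.eq_of_mem {K : Type} [Field K] {L₁ L₂ : ProjLine K} (h : L₁ ≠ L₂) {p q : P2 K}
    (hp1 : p ∈ L₁.points) (hp2 : p ∈ L₂.points) (hq1 : q ∈ L₁.points) (hq2 : q ∈ L₂.points) :
    p = q := by
  have hne : L₁.toSubmodule ≠ L₂.toSubmodule := by
    intro e
    apply h
    cases L₁; cases L₂; simp_all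
  have hlt : Module.finrank K ↥(L₁.toSubmodule ⊓ L₂.toSubmodule) < 2 := by
    rw [← L₁.finrank_eq_two]
    apply Submodule.finrank_lt_finrank_of_lt
    refine lt_of_le_of_ne inf_le_left ?_
    intro e
    have hle : L₁.toSubmodule ≤ L₂.toSubmodule := inf_eq_left.mp e
    exact hne (Submodule.eq_of_le_of_finrank_eq hle
      (by rw [L₁.finrank_eq_two, L₂.finrank_eq_two]))
  have key : ∀ r : P2 K, r ∈ L₁.points → r ∈ L₂.points →
      r.submodule = L₁.toSubmodule ⊓ L₂.toSubmodule := by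
    intro r h1 h2
    apply Submodule.eq_of_le_of_finrank_le (le_inf h1 h2)
    rw [Projectivization.finrank_submodule]
    omega
  exact Projectivization.submodule_injective ((key p hp1 hp2).trans (key q hq1 hq2).symm)

/-- Pure double counting. -/
theorem double_count {P Λ : Type} [DecidableEq P] [DecidableEq Λ] (I : P → Λ → Prop)
    [∀ p, DecidablePred (I p)] [∀ l, DecidablePred (fun p => I p l)]
    (X : Finset P) (A : Finset Λ) (s : ℕ)
    (hA : A.card = s + 1) (hX : 2 * X.card ≤ s * (s + 1))
    (hl : ∀ l ∈ A, (X.filter (fun p => I p l)).card = s)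
    (hI : ∀ l₁ l₂ p q, l₁ ≠ l₂ → I p l₁ → I p l₂ → I q l₁ → I q l₂ → p = q) :
    (∀ p ∈ X, (A.filter (I p)).card = 2) ∧
    ∀ l₁ ∈ A, ∀ l₂ ∈ A, l₁ ≠ l₂ → ∃ p ∈ X, I p l₁ ∧ I p l₂ := by
  classical
  have h1 : ∑ p ∈ X, (A.filter (I p)).card = (s + 1) * s := by
    have := Finset.sum_card_bipartiteAbove_eq_sum_card_bipartiteBelow (s := X) (t := A) I
    simp only [Finset.bipartiteAbove, Finset.bipartiteBelow] at this
    rw [this, Finset.sum_congr rfl hl]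
    simp [hA]
  let J : P → Λ × Λ → Prop := fun p l => I p l.1 ∧ I p l.2
  have hle : ∀ l ∈ A.offDiag, (X.filter (fun p => J p l)).card ≤ 1 := by
    rintro ⟨l, m⟩ hlm
    rw [Finset.mem_offDiag] at hlm
    rw [Finset.card_le_one]
    intro a ha b hb
    simp only [Finset.mem_filter, J] at ha hb
    exact hI l m a b hlm.2.2 ha.2.1 ha.2.2 hb.2.1 hb.2.2
  have h2 : ∑ p ∈ X, (A.filter (I p)).offDiag.card =
      ∑ l ∈ A.offDiag, (X.filter (fun p => J p l)).card := by
    have := Finset.sum_card_bipartiteAbove_eq_sum_card_bipartiteBelow (s := X) (t := A.offDiag) J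
    simp only [Finset.bipartiteAbove, Finset.bipartiteBelow] at this
    rw [← this]
    refine Finset.sum_congr rfl fun p _ => ?_
    congr 1
    ext ⟨l, m⟩
    simp only [Finset.mem_filter, Finset.mem_offDiag, J]
    tauto
  have hoff : A.offDiag.card = (s + 1) * s := by
    rw [Finset.offDiag_card, hA]
    have : (s + 1) * (s + 1) = (s + 1) * s + (s + 1) := by ring
    omega
  have h3 : ∑ l ∈ A.offDiag, (X.filter (fun p => J p l)).card ≤ (s + 1) * s := by
    rw [← hoff]
    simpa using Finset.sum_le_card_nsmul _ _ 1 hle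
  have hoffZ : ∀ p, (((A.filter (I p)).offDiag.card : ℕ) : ℤ) =
      ((A.filter (I p)).card : ℤ) * ((A.filter (I p)).card - 1) := by
    intro p
    rw [Finset.offDiag_card, Nat.cast_sub (Nat.le_mul_self _)]
    push_cast; ring
  have h1Z : ∑ p ∈ X, ((A.filter (I p)).card : ℤ) = (s + 1) * s := by exact_mod_cast h1
  have h2Z : ∑ p ∈ X, ((A.filter (I p)).card : ℤ) * ((A.filter (I p)).card - 1) ≤ (s + 1) * s := by
    rw [← Finset.sum_congr rfl (fun p _ => hoffZ p)]
    have := h2.le.trans h3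
    exact_mod_cast this
  have hXZ : 2 * (X.card : ℤ) ≤ s * (s + 1) := by exact_mod_cast hX
  have hnn : ∀ p ∈ X, 0 ≤ (((A.filter (I p)).card : ℤ) - 1) * ((A.filter (I p)).card - 2) := by
    intro p _
    rcases le_or_gt ((A.filter (I p)).card : ℤ) 1 with h | h
    · exact mul_nonneg_of_nonpos_of_nonpos (by linarith) (by linarith)
    · exact mul_nonneg (by linarith) (by linarith [Int.add_one_le_iff.mpr h])
  have hsum : ∑ p ∈ X, (((A.filter (I p)).card : ℤ) - 1) * ((A.filter (I p)).card - 2) =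
      ∑ p ∈ X, ((A.filter (I p)).card : ℤ) * ((A.filter (I p)).card - 1)
      - 2 * ∑ p ∈ X, ((A.filter (I p)).card : ℤ) + 2 * X.card := by
    rw [Finset.mul_sum, ← Finset.sum_sub_distrib, mul_comm (2 : ℤ) (X.card : ℤ), ← nsmul_eq_mul,
      ← Finset.sum_const, ← Finset.sum_add_distrib]
    exact Finset.sum_congr rfl fun p _ => by ring
  have hz := (Finset.sum_eq_zero_iff_of_nonneg hnn).mp
    (le_antisymm (by rw [hsum, h1Z]; linarith) (Finset.sum_nonneg hnn))
  have hle2 : ∀ p ∈ X, (A.filter (I p)).card ≤ 2 := by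
    intro p hp
    rcases mul_eq_zero.mp (hz p hp) with h | h <;> omega
  have htot : ∑ p ∈ X, (A.filter (I p)).card = ∑ p ∈ X, 2 := by
    apply le_antisymm (Finset.sum_le_sum hle2)
    rw [h1]; simp; linarith
  have hr := (Finset.sum_eq_sum_iff_of_le hle2).mp htot
  refine ⟨hr, ?_⟩
  have hcardX : X.card * 2 = (s + 1) * s := by rw [← h1, htot]; simp
  have h4 : ∑ l ∈ A.offDiag, (X.filter (fun p => J p l)).card = ∑ l ∈ A.offDiag, 1 := by
    rw [← h2, Finset.sum_congr rfl (g := fun _ => 2) (fun p hp => by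
      rw [Finset.offDiag_card, hr p hp])]
    simp [hcardX, hoff]
  have h5 := (Finset.sum_eq_sum_iff_of_le hle).mp h4
  intro l hl m hm hlm
  have h6 := h5 (l, m) (Finset.mem_offDiag.mpr ⟨hl, hm, hlm⟩)
  obtain ⟨p, hp⟩ := Finset.card_pos.mp (h6 ▸ Nat.one_pos)
  rw [Finset.mem_filter] at hp
  exact ⟨p, hp.1, hp.2⟩

/-- **Lemma (case of exactly `s+1` lines).** Let `X` be a k-configuration of
type `(1,2,…,s)`, `s ≥ 2`, with exactly `s + 1` lines each containing exactly
`s` points of `X`. Then the points of `X` are precisely the pairwise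
intersection points of those lines. -/
theorem kconfig_splusone_lines {K : Type} [Field K] [IsAlgClosed K] {s : ℕ} (hs : 2 ≤ s)
    (X : Set (P2 K)) (Xs : Fin s → Set (P2 K)) (Ls : Fin s → ProjLine K)
    (hX : IsKConfig X (fun i : Fin s => i.1 + 1) Xs Ls)
    (hfin : {L : ProjLine K | (X ∩ L.points).ncard = s}.Finite)
    (hcard : {L : ProjLine K | (X ∩ L.points).ncard = s}.ncard = s + 1) :
    X = {p : P2 K | ∃ L₁ L₂ : ProjLine K, L₁ ≠ L₂ ∧
      (X ∩ L₁.points).ncard = s ∧ (X ∩ L₂.points).ncard = s ∧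
      p ∈ L₁.points ∧ p ∈ L₂.points} := by
  classical
  have hXfin : X.Finite := by
    rw [hX.union_eq]
    refine Set.finite_iUnion fun i => Set.finite_of_ncard_pos ?_
    rw [hX.card_eq i]
    exact Nat.succ_pos _
  have hXcard : 2 * X.ncard ≤ s * (s + 1) := by
    have h1 : X.ncard ≤ ∑ i : Fin s, (i.1 + 1) := by
      calc X.ncard = (⋃ i ∈ (Finset.univ : Finset (Fin s)), Xs i).ncard := by
            rw [hX.union_eq]; simp
        _ ≤ ∑ i : Fin s, (Xs i).ncard := Finset.set_ncard_biUnion_le _ _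
        _ = ∑ i : Fin s, (i.1 + 1) := Finset.sum_congr rfl fun i _ => hX.card_eq i
    have h2 : ∀ n : ℕ, 2 * ∑ i ∈ Finset.range n, (i + 1) = n * (n + 1) := by
      intro n
      induction n with
      | zero => simp
      | succ n ih => rw [Finset.sum_range_succ, mul_add, ih]; ring
    rw [Fin.sum_univ_eq_sum_range (fun i => i + 1)] at h1
    have := h2 s
    omega
  have hmem : ∀ L, L ∈ hfin.toFinset ↔ (X ∩ L.points).ncard = s := by
    intro L; simp
  obtain ⟨hA, hB⟩ := double_count (fun (p : P2 K) (L : ProjLine K) => p ∈ L.points)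
    hXfin.toFinset hfin.toFinset s
    (by rw [← Set.ncard_eq_toFinset_card _ hfin, hcard])
    (by rw [← Set.ncard_eq_toFinset_card _ hXfin]; exact hXcard)
    (by
      intro L hL
      rw [← (hmem L).mp hL, ← Set.ncard_coe_finset]
      congr 1
      ext p
      simp)
    (fun l₁ l₂ p q h h1 h2 h3 h4 => ProjLine.eq_of_mem h h1 h2 h3 h4)
  ext p
  constructor
  · intro hp
    obtain ⟨L, M, hLM, hEq⟩ := Finset.card_eq_two.mp (hA p (hXfin.mem_toFinset.mpr hp))
    have hL : L ∈ hfin.toFinset.filter (fun L => p ∈ L.points) := by rw [hEq]; simp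
    have hM : M ∈ hfin.toFinset.filter (fun L => p ∈ L.points) := by rw [hEq]; simp
    rw [Finset.mem_filter] at hL hM
    exact ⟨L, M, hLM, (hmem L).mp hL.1, (hmem M).mp hM.1, hL.2, hM.2⟩
  · rintro ⟨L, M, hLM, hL, hM, hpL, hpM⟩
    obtain ⟨q, hq, hqL, hqM⟩ := hB L ((hmem L).mpr hL) M ((hmem M).mpr hM) hLM
    rw [ProjLine.eq_of_mem hLM hpL hpM hqL hqM]
    exact hXfin.mem_toFinset.mp hq
end

section
/- Let X ⊆ P² be a k-configuration of type (1,2,…,s) with s ≥ 2, and suppose there are exactly s lines in P² each containing exactly s points of X. Then there exist subsets X₁,…,X_s and lines L₁,…,L_s defining X as a k-configuration of type (1,2,…,s) such that L₁,…,L_s are precisely the s lines containing s points of X, and moreover, for each i = 1,…,s, the set X ∩ L_i consists of the s − 1 intersection points L_i ∩ L_j (j ≠ i) together with one point P_i that lies on no line L_j with j ≠ i. -/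
theorem kc_line_unique {K : Type} [Field K] {L M : ProjLine K} (h : L ≠ M) {p q : P2 K}
    (hpL : p ∈ L.points) (hpM : p ∈ M.points) (hqL : q ∈ L.points) (hqM : q ∈ M.points) :
    p = q := by
  have hlt : Module.finrank K ↥(L.toSubmodule ⊓ M.toSubmodule) < 2 := by
    by_contra hcon
    have h1 : L.toSubmodule ⊓ M.toSubmodule = L.toSubmodule :=
      Submodule.eq_of_le_of_finrank_le inf_le_left (by rw [L.finrank_eq_two]; omega)
    have h2 : L.toSubmodule ⊓ M.toSubmodule = M.toSubmodule :=
      Submodule.eq_of_le_of_finrank_le inf_le_right (by rw [M.finrank_eq_two]; omega)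
    apply h
    cases L
    cases M
    simp only [ProjLine.mk.injEq]
    exact h1.symm.trans h2
  have key : ∀ r : P2 K, r ∈ L.points → r ∈ M.points →
      r.submodule = L.toSubmodule ⊓ M.toSubmodule := fun r h1 h2 =>
    Submodule.eq_of_le_of_finrank_le (le_inf h1 h2) (by
      rw [Projectivization.finrank_submodule]; omega)
  exact Projectivization.submodule_injective ((key p hpL hpM).trans (key q hqL hqM).symm)

theorem kc_comb {α : Type} [DecidableEq α] {s : ℕ} (X : Finset α) (A : Fin s → Finset α)
    (hA : ∀ i, A i ⊆ X) (hc : ∀ i, (A i).card = s)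
    (hp : ∀ i j, i ≠ j → (A i ∩ A j).card ≤ 1)
    (hX : X.card ≤ ∑ i : Fin s, (i.1 + 1)) :
    (∀ i, (A i \ (Finset.Ioi i).biUnion A).card = i.1 + 1) ∧
      X = Finset.univ.biUnion (fun i => A i \ (Finset.Ioi i).biUnion A) := by
  have hge : ∀ i, i.1 + 1 ≤ (A i \ (Finset.Ioi i).biUnion A).card := by
    intro i
    have h1 : (A i ∩ (Finset.Ioi i).biUnion A).card ≤ s - 1 - i.1 := by
      rw [Finset.inter_biUnion]
      refine (Finset.card_biUnion_le_card_mul _ _ 1 ?_).trans ?_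
      · intro j hj
        exact hp i j (Finset.mem_Ioi.1 hj).ne
      · simp
    have h2 := Finset.card_sdiff_add_card_inter (A i) ((Finset.Ioi i).biUnion A)
    rw [hc] at h2
    have := i.2
    omega
  have hsub : Finset.univ.biUnion (fun i => A i \ (Finset.Ioi i).biUnion A) ⊆ X := by
    intro p hp
    simp only [Finset.mem_biUnion, Finset.mem_sdiff] at hp
    obtain ⟨i, -, h, -⟩ := hp
    exact hA i h
  have hdisj : ((Finset.univ : Finset (Fin s)) : Set (Fin s)).PairwiseDisjoint
      (fun i => A i \ (Finset.Ioi i).biUnion A) := by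
    have aux : ∀ i j : Fin s, i < j → Disjoint (A i \ (Finset.Ioi i).biUnion A)
        (A j \ (Finset.Ioi j).biUnion A) := by
      intro i j hij
      rw [Finset.disjoint_left]
      intro p h1 h2
      simp only [Finset.mem_biUnion, Finset.mem_sdiff, Finset.mem_Ioi] at h1 h2
      exact h1.2 ⟨j, hij, h2.1⟩
    intro i _ j _ hij
    rcases lt_or_gt_of_ne hij with h | h
    · exact aux i j h
    · exact (aux j i h).symm
  have hcard := Finset.card_biUnion hdisj
  have hle := Finset.card_le_card hsub
  have hsum := Finset.sum_le_sum (fun i (_ : i ∈ Finset.univ) => hge i)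
  refine ⟨fun i => ?_, ?_⟩
  · have := (Finset.sum_eq_sum_iff_of_le (fun i (_ : i ∈ Finset.univ) => hge i)).1 (by omega)
    exact (this i (Finset.mem_univ i)).symm
  · exact (Finset.eq_of_subset_of_card_le hsub (by omega)).symm

theorem kc_comb2 {α : Type} [DecidableEq α] {s : ℕ} (X : Finset α) (A : Fin s → Finset α)
    (hA : ∀ i, A i ⊆ X) (hc : ∀ i, (A i).card = s)
    (hp : ∀ i j, i ≠ j → (A i ∩ A j).card ≤ 1)
    (hX : X.card ≤ ∑ i : Fin s, (i.1 + 1)) (i : Fin s) :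
    (A i \ (Finset.univ.erase i).biUnion A).card = 1 ∧
      ∀ j, j ≠ i → (A i ∩ A j).Nonempty := by
  have hs : 0 < s := i.pos
  let z : Fin s := ⟨0, hs⟩
  let σ := Equiv.swap z i
  have h1 := (kc_comb X (fun j => A (σ j)) (fun j => hA _) (fun j => hc _)
    (fun j k hjk => hp _ _ (fun h => hjk (σ.injective h))) hX).1 z
  have hz : σ z = i := Equiv.swap_apply_left z i
  have h2 : (Finset.Ioi z).biUnion (fun j => A (σ j)) = (Finset.univ.erase i).biUnion A := by
    ext p
    simp only [Finset.mem_biUnion, Finset.mem_Ioi, Finset.mem_erase, Finset.mem_univ, and_true]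
    constructor
    · rintro ⟨j, hj, hpj⟩
      refine ⟨σ j, fun h => hj.ne' (σ.injective (h.trans hz.symm)), hpj⟩
    · rintro ⟨j, hj, hpj⟩
      refine ⟨σ.symm j, ?_, by simpa using hpj⟩
      have : σ.symm j ≠ z := by
        intro h
        apply hj
        rw [← hz, ← h, Equiv.apply_symm_apply]
      exact lt_of_le_of_ne (Fin.le_def.2 (Nat.zero_le _)) this.symm
  rw [h2, hz] at h1
  have h3 : (A i \ (Finset.univ.erase i).biUnion A).card = 1 := h1
  refine ⟨h3, fun j hj => ?_⟩
  by_contra hne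
  rw [Finset.not_nonempty_iff_eq_empty] at hne
  have h4 := Finset.card_sdiff_add_card_inter (A i) ((Finset.univ.erase i).biUnion A)
  rw [hc, h3, Finset.inter_biUnion] at h4
  have h5 : ((Finset.univ.erase i).biUnion fun x => A i ∩ A x).card
      ≤ ∑ x ∈ Finset.univ.erase i, (A i ∩ A x).card := Finset.card_biUnion_le
  have h6 : ∑ x ∈ Finset.univ.erase i, (A i ∩ A x).card < ∑ x ∈ Finset.univ.erase i, 1 := by
    apply Finset.sum_lt_sum
    · intro k hk
      exact hp i k (Finset.ne_of_mem_erase hk).symm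
    · exact ⟨j, Finset.mem_erase.2 ⟨hj, Finset.mem_univ _⟩, by simp [hne]⟩
  simp at h6
  omega

/-- **Lemma (case of exactly `s` lines).** Let `X` be a k-configuration of type
`(1,2,…,s)`, `s ≥ 2`, with exactly `s` lines each containing exactly `s` points
of `X`. Then `X` can be defined using lines `L₁,…,L_s` which are precisely those
`s` lines, and for each `i` the set `X ∩ L_i` consists of the `s − 1`
intersection points `L_i ∩ L_j` (`j ≠ i`) together with one point `P_i` lying
on no other line `L_j`. -/
theorem kconfig_s_lines {K : Type} [Field K] [IsAlgClosed K] {s : ℕ} (hs : 2 ≤ s)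
    (X : Set (P2 K)) (Xs : Fin s → Set (P2 K)) (Ls : Fin s → ProjLine K)
    (hX : IsKConfig X (fun i : Fin s => i.1 + 1) Xs Ls)
    (hfin : {L : ProjLine K | (X ∩ L.points).ncard = s}.Finite)
    (hcard : {L : ProjLine K | (X ∩ L.points).ncard = s}.ncard = s) :
    ∃ (Xs' : Fin s → Set (P2 K)) (Ls' : Fin s → ProjLine K),
      IsKConfig X (fun i : Fin s => i.1 + 1) Xs' Ls' ∧
      {L : ProjLine K | (X ∩ L.points).ncard = s} = Set.range Ls' ∧
      ∀ i : Fin s, ∃ P : P2 K,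
        P ∈ X ∩ (Ls' i).points ∧
        (∀ j : Fin s, j ≠ i → P ∉ (Ls' j).points) ∧
        X ∩ (Ls' i).points =
          insert P {p : P2 K | ∃ j : Fin s, j ≠ i ∧ p ∈ (Ls' i).points ∧ p ∈ (Ls' j).points} ∧
        {p : P2 K | ∃ j : Fin s, j ≠ i ∧ p ∈ (Ls' i).points ∧ p ∈ (Ls' j).points}.ncard
          = s - 1 := by
  classical
  -- `X` is finite with at most `1 + ... + s` points
  have hXfin : X.Finite := by
    rw [hX.union_eq]
    refine Set.finite_iUnion fun i => Set.finite_of_ncard_ne_zero ?_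
    rw [hX.card_eq]
    omega
  obtain ⟨F, rfl⟩ := hXfin.exists_finset_coe
  have hF : F.card ≤ ∑ i : Fin s, (i.1 + 1) := by
    rw [← Set.ncard_coe_finset, hX.union_eq]
    refine (Set.ncard_iUnion_le_of_fintype _).trans ?_
    exact Finset.sum_le_sum fun i _ => (hX.card_eq i).le
  -- enumerate the lines
  have hcard' : hfin.toFinset.card = s := by
    rw [← Set.ncard_eq_toFinset_card _ hfin, hcard]
  let e := hfin.toFinset.equivFinOfCardEq hcard'
  let M : Fin s → ProjLine K := fun i => (e.symm i).1
  have hMinj : Function.Injective M := fun i j h => e.symm.injective (Subtype.ext h)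
  have hMrange : {L : ProjLine K | ((F : Set (P2 K)) ∩ L.points).ncard = s} = Set.range M := by
    ext L
    constructor
    · intro hL
      exact ⟨e ⟨L, hfin.mem_toFinset.2 hL⟩, by simp [M]⟩
    · rintro ⟨i, rfl⟩
      exact hfin.mem_toFinset.1 (e.symm i).2
  have hMs : ∀ i, ((F : Set (P2 K)) ∩ (M i).points).ncard = s := fun i => by
    have : M i ∈ Set.range M := ⟨i, rfl⟩
    rwa [← hMrange] at this
  let A : Fin s → Finset (P2 K) := fun i => F.filter (fun p => p ∈ (M i).points)
  have hmemA : ∀ i p, p ∈ A i ↔ p ∈ F ∧ p ∈ (M i).points := fun i p => Finset.mem_filter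
  have hAset : ∀ i, (A i : Set (P2 K)) = (F : Set (P2 K)) ∩ (M i).points := by
    intro i
    ext p
    simp [hmemA]
  have hA : ∀ i, A i ⊆ F := fun i => Finset.filter_subset _ _
  have hc : ∀ i, (A i).card = s := fun i => by
    rw [← Set.ncard_coe_finset, hAset, hMs]
  have hp : ∀ i j, i ≠ j → (A i ∩ A j).card ≤ 1 := by
    intro i j hij
    rw [Finset.card_le_one]
    intro p h1 q h2
    simp only [Finset.mem_inter, hmemA] at h1 h2
    exact kc_line_unique (fun h => hij (hMinj h)) h1.1.2 h1.2.2 h2.1.2 h2.2.2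
  obtain ⟨hB, hU⟩ := kc_comb F A hA hc hp hF
  have hC := kc_comb2 F A hA hc hp hF
  refine ⟨fun i => ((A i \ (Finset.Ioi i).biUnion A : Finset (P2 K)) : Set (P2 K)), M,
    ⟨hX.one_le, hX.strictMono, hMinj, ?_, ?_, ?_, ?_⟩, hMrange, ?_⟩
  · conv_lhs => rw [hU]
    simp only [Finset.coe_biUnion, Finset.coe_univ, Set.mem_univ, Set.iUnion_true]
  · intro i
    rw [Set.ncard_coe_finset]
    exact hB i
  · intro i p hpi
    exact ((hmemA i p).1 (Finset.mem_sdiff.1 (Finset.mem_coe.1 hpi)).1).2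
  · intro i j hji p hpj hpi
    obtain ⟨h1, h2⟩ := Finset.mem_sdiff.1 (Finset.mem_coe.1 hpj)
    apply h2
    exact Finset.mem_biUnion.2 ⟨i, Finset.mem_Ioi.2 hji, (hmemA i p).2 ⟨hA j h1, hpi⟩⟩
  · intro i
    obtain ⟨P, hP⟩ := Finset.card_eq_one.1 (hC i).1
    have hPm : P ∈ A i \ (Finset.univ.erase i).biUnion A := by simp [hP]
    obtain ⟨hPi, hPn⟩ := Finset.mem_sdiff.1 hPm
    have hPnot : ∀ j : Fin s, j ≠ i → P ∉ (M j).points := fun j hj hPj =>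
      hPn (Finset.mem_biUnion.2 ⟨j, Finset.mem_erase.2 ⟨hj, Finset.mem_univ _⟩,
        (hmemA j P).2 ⟨hA i hPi, hPj⟩⟩)
    have hinX : ∀ j p, j ≠ i → p ∈ (M i).points → p ∈ (M j).points → p ∈ F := by
      intro j p hj h1 h2
      obtain ⟨q, hq⟩ := (hC i).2 j hj
      simp only [Finset.mem_inter, hmemA] at hq
      have : p = q := kc_line_unique (fun h => hj (hMinj h).symm) h1 h2 hq.1.2 hq.2.2
      rw [this]
      exact hq.1.1
    have hset : {p : P2 K | ∃ j : Fin s, j ≠ i ∧ p ∈ (M i).points ∧ p ∈ (M j).points} =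
        (((A i).erase P : Finset (P2 K)) : Set (P2 K)) := by
      ext p
      simp only [Set.mem_setOf_eq, Finset.mem_coe, Finset.mem_erase]
      constructor
      · rintro ⟨j, hj, h1, h2⟩
        refine ⟨?_, (hmemA i p).2 ⟨hinX j p hj h1 h2, h1⟩⟩
        rintro rfl
        exact hPnot j hj h2
      · rintro ⟨hne, hpi⟩
        by_contra hcon
        apply hne
        have : p ∈ A i \ (Finset.univ.erase i).biUnion A := by
          refine Finset.mem_sdiff.2 ⟨hpi, fun h => hcon ?_⟩
          obtain ⟨j, hj, hpj⟩ := Finset.mem_biUnion.1 h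
          exact ⟨j, Finset.ne_of_mem_erase hj, ((hmemA i p).1 hpi).2, ((hmemA j p).1 hpj).2⟩
        rw [hP] at this
        exact Finset.mem_singleton.1 this
    refine ⟨P, ?_, hPnot, ?_, ?_⟩
    · rw [← hAset]
      exact hPi
    · rw [hset, ← hAset, ← Finset.coe_insert, Finset.insert_erase hPi]
    · rw [hset, Set.ncard_coe_finset, Finset.card_erase_of_mem hPi, hc]
end
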